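/- Suppose the open set ω ⊂ 𝕋² satisfies the strip assumption, let x₀ ∈ ω and r₀ > 0 with B(x₀,2r₀) ⊂ ω, let 𝔟 ∈ ℝ∖{0} and R > 0. Then there exist T > 0 and c₀ > 0 such that for every speed of light c ≥ c₀ there exist a smooth f̄ : [0,T]×𝕋²×ℝ² → ℝ, compactly supported in v, a smooth potential φ̄ : [0,T]×𝕋² → ℝ, and a smooth source Ḡ with spatial support contained in ω, such that: (i) ∂ₜf̄ + v̂·∇ₓf̄ + div_v[(∇ₓφ̄ + v̂⊥𝔟) f̄] = Ḡ and Δₓφ̄ = ∫_{ℝ²} f̄ dv − ∫_{𝕋²×ℝ²} f̄ dv dx on [0,T]; (ii) f̄(0,·,·) = f̄(T,·,·) = 0; (iii) for every t ∈ [0,T] and v ∈ ℝ², x ↦ f̄(t,x,v) is compactly supported in ω; (iv) the relativistic characteristics (X,V) associated with ∇ₓφ̄ + v̂⊥𝔟 satisfy: for every x ∈ 𝕋² and v ∈ B(0,R) there exists t ∈ [T/9, 8T/9] with X(t,0,x,v) ∈ B(x₀, r₀/2) and |V(t,0,x,v)| ≥ 5; (v) with ρ̄ := ∫_{ℝ²}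 f̄ dv and j̄ := ∫_{ℝ²} f̄ v̂ dv, the local conservation of charge ∂ₜρ̄ + divₓ j̄ = 0 holds for all (t,x) ∈ [0,T]×𝕋², and ∫_{𝕋²} j̄ dx = 0 for all t ∈ [0,T]. Moreover ρ̄ and j̄ can be chosen independently of c ∈ [c₀,∞). -/

import Mathlib

noncomputable section

open MeasureTheory Real

/-- Points of the plane; the torus `𝕋²` is represented via `ℤ²`-periodic objects on `ℝ²`. -/
abbrev V2 := ℝ × ℝ

/-- `v ↦ v⊥ = (v₂, -v₁)`. -/
def pperp (v : V2) : V2 := (v.2, -v.1)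

/-- Euclidean norm on `ℝ²`. -/
noncomputable def en (v : V2) : ℝ := Real.sqrt (v.1 ^ 2 + v.2 ^ 2)

/-- Relativistic velocity `v̂ = v/√(1+|v|²/c²)` for speed of light `c`. -/
noncomputable def vhat (c : ℝ) (v : V2) : V2 :=
  (1 / Real.sqrt (1 + (v.1 ^ 2 + v.2 ^ 2) / c ^ 2)) • v

/-- `ℤ²`-periodicity of a function on `ℝ²` (i.e. the function lives on the torus `𝕋²`). -/
def Zper {α : Type*} (g : V2 → α) : Prop :=
  ∀ (x : V2) (m n : ℤ), g (x.1 + (m : ℝ), x.2 + (n : ℝ)) = g x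

/-- A fundamental domain for the torus. -/
def unitSq : Set V2 := Set.Icc ((0 : ℝ), (0 : ℝ)) ((1 : ℝ), (1 : ℝ))

/-- Integral over the torus of a (periodic) function. -/
noncomputable def intT2 (g : V2 → ℝ) : ℝ := ∫ x in unitSq, g x

/-- Integral over `𝕋² × ℝ²`. -/
noncomputable def intT2R2 (g : V2 → V2 → ℝ) : ℝ := ∫ x in unitSq, ∫ v : V2, g x v

/-- Spatial divergence of a vector field on `ℝ²`. -/
noncomputable def divF (E : V2 → V2) (x : V2) : ℝ :=
  fderiv ℝ (fun y => (E y).1) x ((1 : ℝ), (0 : ℝ)) +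
    fderiv ℝ (fun y => (E y).2) x ((0 : ℝ), (1 : ℝ))

/-- Geometric control condition for a (periodic) set `ω ⊆ 𝕋²`. -/
def GCC (ω : Set V2) : Prop :=
  ∀ x e : V2, en e = 1 → ∃ y : ℝ, 0 ≤ y ∧ x + y • e ∈ ω

/-- Open ball of the torus, of center `x₀` and radius `r` (as a periodic subset of `ℝ²`). -/
def ballT2 (x₀ : V2) (r : ℝ) : Set V2 :=
  {x : V2 | ∃ m n : ℤ, en (x.1 - (x₀.1 + (m : ℝ)), x.2 - (x₀.2 + (n : ℝ))) < r}

/-- The full preimage in `ℝ²` of the image in `𝕋²` of the line through `p` directed by `d`. -/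
def periodizedLine (p d : V2) : Set V2 :=
  {x : V2 | ∃ (t : ℝ) (m n : ℤ), x = p + t • d + ((m : ℝ), (n : ℝ))}

/-- The strip assumption: `ω` contains the image of a straight line of `ℝ²`
which is closed in the torus. -/
def StripAssumption (ω : Set V2) : Prop :=
  ∃ p d : V2, d ≠ 0 ∧ IsClosed (periodizedLine p d) ∧ periodizedLine p d ⊆ ω

/-- All iterated derivatives of order at most `k` are bounded by `κ` in sup norm. -/
def DerivBound {E F : Type*} [NormedAddCommGroup E] [NormedSpace ℝ E]
    [NormedAddCommGroup F] [NormedSpace ℝ F] (k : ℕ) (κ : ℝ) (g : E → F) : Prop :=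
  ∀ i : ℕ, i ≤ k → ∀ p, ‖iteratedFDeriv ℝ i g p‖ ≤ κ

/-- Relativistic characteristics for the force field `Force`, with speed of light `c`,
starting from `(x,v)` at time `s`. -/
def IsRelChar (c : ℝ) (Force : ℝ → V2 → V2 → V2) (s : ℝ) (x v : V2)
    (X V : ℝ → V2) : Prop :=
  X s = x ∧ V s = v ∧
    ∀ t : ℝ, HasDerivAt X (vhat c (V t)) t ∧ HasDerivAt V (Force t (X t) (V t)) t

/-- `(F, E, b)` is a classical, `𝕋²`-periodic solution on `[0,T]` of the 2D relativistic
Vlasov–Maxwell system with speed of light `c` and source `S`. -/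
def IsVMSolution (c T : ℝ) (F : ℝ × V2 × V2 → ℝ) (E : ℝ × V2 → V2)
    (b : ℝ × V2 → ℝ) (S : ℝ × V2 × V2 → ℝ) : Prop :=
  ContDiff ℝ 1 F ∧ ContDiff ℝ 1 E ∧ ContDiff ℝ 1 b ∧
  (∀ t v, Zper fun x => F (t, x, v)) ∧ (∀ t, Zper fun x => E (t, x)) ∧
  (∀ t, Zper fun x => b (t, x)) ∧
  ∀ t ∈ Set.Icc (0 : ℝ) T, ∀ x v : V2,
    -- Vlasov equation: ∂ₜf + v̂·∇ₓf + (E + c⁻¹ v̂⊥ b)·∇ᵥf = S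
    (fderiv ℝ F (t, x, v)
        ((1 : ℝ), vhat c v, E (t, x) + (c⁻¹ * b (t, x)) • pperp (vhat c v))
      = S (t, x, v)) ∧
    -- ∂ₜE₁ − c ∂_{x₂} b = −∫ f v̂₁ dv
    (fderiv ℝ (fun p => (E p).1) (t, x) ((1 : ℝ), ((0 : ℝ), (0 : ℝ)))
        - c * fderiv ℝ b (t, x) ((0 : ℝ), ((0 : ℝ), (1 : ℝ)))
      = -∫ w : V2, F (t, x, w) * (vhat c w).1) ∧
    -- ∂ₜE₂ + c ∂_{x₁} b = −∫ f v̂₂ dv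
    (fderiv ℝ (fun p => (E p).2) (t, x) ((1 : ℝ), ((0 : ℝ), (0 : ℝ)))
        + c * fderiv ℝ b (t, x) ((0 : ℝ), ((1 : ℝ), (0 : ℝ)))
      = -∫ w : V2, F (t, x, w) * (vhat c w).2) ∧
    -- ∂ₜb + c (∂_{x₁}E₂ − ∂_{x₂}E₁) = 0
    (fderiv ℝ b (t, x) ((1 : ℝ), ((0 : ℝ), (0 : ℝ)))
        + c * (fderiv ℝ (fun p => (E p).2) (t, x) ((0 : ℝ), ((1 : ℝ), (0 : ℝ)))
            - fderiv ℝ (fun p => (E p).1) (t, x) ((0 : ℝ), ((0 : ℝ), (1 : ℝ)))) = 0) ∧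
    -- Gauss law: ∂_{x₁}E₁ + ∂_{x₂}E₂ = ∫ f dv − ∫∫ f dv dx
    (fderiv ℝ (fun p => (E p).1) (t, x) ((0 : ℝ), ((1 : ℝ), (0 : ℝ)))
        + fderiv ℝ (fun p => (E p).2) (t, x) ((0 : ℝ), ((0 : ℝ), (1 : ℝ)))
      = (∫ w : V2, F (t, x, w)) - intT2R2 fun y w => F (t, y, w))


/-- Spatial gradient of a time-dependent potential. -/
noncomputable def gradx (φ : ℝ × V2 → ℝ) (t : ℝ) (x : V2) : V2 :=
  (fderiv ℝ (fun y => φ (t, y)) x ((1 : ℝ), (0 : ℝ)),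
   fderiv ℝ (fun y => φ (t, y)) x ((0 : ℝ), (1 : ℝ)))

/-- Spatial Laplacian of a time-dependent potential. -/
noncomputable def lapx (φ : ℝ × V2 → ℝ) (t : ℝ) (x : V2) : ℝ :=
  fderiv ℝ (fun y => fderiv ℝ (fun z => φ (t, z)) y ((1 : ℝ), (0 : ℝ))) x
      ((1 : ℝ), (0 : ℝ)) +
    fderiv ℝ (fun y => fderiv ℝ (fun z => φ (t, z)) y ((0 : ℝ), (1 : ℝ))) x
      ((0 : ℝ), (1 : ℝ))

lemma mem_periodizedLine {p d x : V2} (hd : d ≠ 0) (m n : ℤ)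
    (h : d.1 * (x.2 - p.2) - d.2 * (x.1 - p.1) = m * d.1 + n * d.2) :
    x ∈ periodizedLine p d := by
  have hpos : d.1 ^ 2 + d.2 ^ 2 ≠ 0 := by
    intro h0
    apply hd
    ext
    · exact pow_eq_zero_iff (two_ne_zero) |>.1 (by nlinarith [sq_nonneg d.1, sq_nonneg d.2])
    · exact pow_eq_zero_iff (two_ne_zero) |>.1 (by nlinarith [sq_nonneg d.1, sq_nonneg d.2])
  refine ⟨((x.1 - p.1 + n) * d.1 + (x.2 - p.2 - m) * d.2) / (d.1 ^ 2 + d.2 ^ 2), -n, m, ?_⟩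
  ext
  · simp only [Prod.fst_add, Prod.smul_fst, smul_eq_mul]
    push_cast
    field_simp
    linear_combination (-d.2) * h
  · simp only [Prod.snd_add, Prod.smul_snd, smul_eq_mul]
    field_simp
    linear_combination d.1 * h

lemma exists_strip_of_coprime {ω : Set V2} (hω : IsOpen ω) (hper : Zper fun x => x ∈ ω)
    {p : V2} {k₁ k₂ m n : ℤ} (hmn : m * k₁ + n * k₂ = 1)
    (hline : ∀ t : ℝ, p + t • ((k₁ : ℝ), (k₂ : ℝ)) ∈ ω) :
    ∃ ε > (0 : ℝ), ∀ (x : V2) (j : ℤ),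
      |k₁ * x.2 - k₂ * x.1 - (k₁ * p.2 - k₂ * p.1) - j| < ε → x ∈ ω := by
  have hmn' : (m : ℝ) * k₁ + n * k₂ = 1 := by exact_mod_cast hmn
  set K : Set V2 := (fun t : ℝ => p + t • ((k₁ : ℝ), (k₂ : ℝ))) '' Set.Icc 0 1 with hK
  have hKc : IsCompact K := isCompact_Icc.image (by fun_prop)
  have hKω : K ⊆ ω := by
    rintro _ ⟨t, -, rfl⟩
    exact hline t
  obtain ⟨ε, hε, hsub⟩ := hKc.exists_thickening_subset_open hω hKω
  set C : ℝ := 1 + |(m : ℝ)| + |(n : ℝ)| with hC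
  have hCpos : 0 < C := by positivity
  refine ⟨ε / C, by positivity, fun x j hx => ?_⟩
  set δ : ℝ := k₁ * x.2 - k₂ * x.1 - (k₁ * p.2 - k₂ * p.1) - j with hδ
  set t : ℝ := (x.1 - p.1) * m + (x.2 - p.2) * n with ht
  have hx1 : x.1 = p.1 + t * k₁ - (δ + j) * n := by
    rw [hδ, ht]; linear_combination (-(x.1 - p.1)) * hmn'
  have hx2 : x.2 = p.2 + t * k₂ + (δ + j) * m := by
    rw [hδ, ht]; linear_combination (-(x.2 - p.2)) * hmn'
  have hfl : t = ⌊t⌋ + Int.fract t := (Int.floor_add_fract t).symm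
  set y : V2 := (p.1 + Int.fract t * k₁ - δ * n, p.2 + Int.fract t * k₂ + δ * m) with hy
  have hxy : x = (y.1 + ((⌊t⌋ * k₁ - j * n : ℤ) : ℝ), y.2 + ((⌊t⌋ * k₂ + j * m : ℤ) : ℝ)) := by
    ext
    · push_cast; rw [hy]; linear_combination hx1 + (k₁ : ℝ) * hfl
    · push_cast; rw [hy]; linear_combination hx2 + (k₂ : ℝ) * hfl
  have hyω : y ∈ ω := by
    apply hsub
    rw [Metric.mem_thickening_iff]
    refine ⟨p + Int.fract t • ((k₁ : ℝ), (k₂ : ℝ)),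
      ⟨Int.fract t, ⟨Int.fract_nonneg t, (Int.fract_lt_one t).le⟩, rfl⟩, ?_⟩
    have hb : |δ| * C < ε := by rwa [lt_div_iff₀ hCpos] at hx
    have e1 : |δ * n| ≤ |δ| * C := by
      rw [abs_mul]; gcongr; rw [hC]; linarith [abs_nonneg (m : ℝ)]
    have e2 : |δ * m| ≤ |δ| * C := by
      rw [abs_mul]; gcongr; rw [hC]; linarith [abs_nonneg (n : ℝ)]
    rw [Prod.dist_eq, max_lt_iff, Real.dist_eq, Real.dist_eq]
    constructor
    · have : y.1 - (p + Int.fract t • ((k₁ : ℝ), (k₂ : ℝ))).1 = -(δ * n) := by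
        simp [hy]
      rw [this, abs_neg]; linarith
    · have : y.2 - (p + Int.fract t • ((k₁ : ℝ), (k₂ : ℝ))).2 = δ * m := by
        simp [hy]
      rw [this]; linarith
  rw [hxy]
  have := hper y (⌊t⌋ * k₁ - j * n) (⌊t⌋ * k₂ + j * m)
  simp only [eq_iff_iff] at this
  exact this.2 hyω

/-- The strip assumption yields a primitive integer direction and a quantitative strip in `ω`. -/
lemma StripAssumption.exists_cos_le {ω : Set V2} (hω : IsOpen ω) (hper : Zper fun x => x ∈ ω)
    (hs : StripAssumption ω) :
    ∃ d₁ d₂ : ℤ, 1 ≤ (d₁ : ℝ) ^ 2 + (d₂ : ℝ) ^ 2 ∧ ∃ s₀ κ : ℝ, κ < 1 ∧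
      ∀ x, x ∉ ω → cos (2 * π * (d₁ * x.2 - d₂ * x.1 - s₀)) ≤ κ := by
  obtain ⟨p, d, hd, hcl, hsub⟩ := hs
  rcases AddSubgroup.dense_or_cyclic (AddSubgroup.closure {d.1, d.2}) with hden | ⟨g, hg⟩
  · have huniv : ∀ x, x ∈ ω := by
      intro x
      apply hsub
      set q : ℝ := d.1 * (x.2 - p.2) - d.2 * (x.1 - p.1) with hq
      set f : ℝ → V2 := fun h => x + ((h - q) / (d.1 ^ 2 + d.2 ^ 2)) • (-d.2, d.1) with hf
      have hfc : Continuous f := by fun_prop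
      have hpos : d.1 ^ 2 + d.2 ^ 2 ≠ 0 := by
        intro h0
        apply hd
        ext
        · exact pow_eq_zero_iff (two_ne_zero) |>.1 (by nlinarith [sq_nonneg d.1, sq_nonneg d.2])
        · exact pow_eq_zero_iff (two_ne_zero) |>.1 (by nlinarith [sq_nonneg d.1, sq_nonneg d.2])
      have hcl' : IsClosed (f ⁻¹' periodizedLine p d) := hcl.preimage hfc
      have hsub' : ((AddSubgroup.closure {d.1, d.2} : AddSubgroup ℝ) : Set ℝ) ⊆
          f ⁻¹' periodizedLine p d := by
        intro h hh
        obtain ⟨m, n, hmn⟩ := AddSubgroup.mem_closure_pair.1 hh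
        refine mem_periodizedLine hd m n ?_
        simp only [zsmul_eq_mul] at hmn
        rw [hmn]
        simp only [hf, Prod.fst_add, Prod.snd_add, Prod.smul_fst, Prod.smul_snd, smul_eq_mul]
        field_simp
        rw [hq]; ring
      have : q ∈ f ⁻¹' periodizedLine p d := by
        have := hcl'.closure_subset_iff.2 hsub'
        exact this (hden q)
      have hfq : f q = x := by ext <;> simp [hf]
      rwa [Set.mem_preimage, hfq] at this
    exact ⟨1, 0, by norm_num, 0, 0, by norm_num, fun x hx => absurd (huniv x) hx⟩
  · have h1 : d.1 ∈ AddSubgroup.closure {g} := hg ▸ AddSubgroup.subset_closure (by simp)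
    have h2 : d.2 ∈ AddSubgroup.closure {g} := hg ▸ AddSubgroup.subset_closure (by simp)
    have h3 : g ∈ AddSubgroup.closure {d.1, d.2} := hg ▸ AddSubgroup.subset_closure (by simp)
    obtain ⟨k₁, hk₁⟩ := AddSubgroup.mem_closure_singleton.1 h1
    obtain ⟨k₂, hk₂⟩ := AddSubgroup.mem_closure_singleton.1 h2
    obtain ⟨m, n, hmn⟩ := AddSubgroup.mem_closure_pair.1 h3
    simp only [zsmul_eq_mul] at hk₁ hk₂ hmn
    have hg0 : g ≠ 0 := by
      rintro rfl
      apply hd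
      ext
      · simpa using hk₁.symm
      · simpa using hk₂.symm
    have hbez' : (m : ℝ) * k₁ + n * k₂ = 1 := by
      apply mul_right_cancel₀ hg0
      linear_combination hmn + (m : ℝ) * hk₁ + (n : ℝ) * hk₂
    have hbez : m * k₁ + n * k₂ = 1 := by exact_mod_cast hbez'
    have hline : ∀ t : ℝ, p + t • ((k₁ : ℝ), (k₂ : ℝ)) ∈ ω := by
      intro t
      refine hsub (mem_periodizedLine hd 0 0 ?_)
      simp only [Prod.fst_add, Prod.snd_add, Prod.smul_fst, Prod.smul_snd, smul_eq_mul]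
      rw [← hk₁, ← hk₂]
      push_cast
      ring
    obtain ⟨ε, hε, hstrip⟩ := exists_strip_of_coprime hω hper hbez hline
    have hpi := Real.pi_pos
    set ε' := min ε (1 / 2) with hε'
    have hε'0 : 0 < ε' := by positivity
    have hε'2 : ε' ≤ 1 / 2 := min_le_right _ _
    refine ⟨k₁, k₂, ?_, k₁ * p.2 - k₂ * p.1, cos (2 * π * ε'), ?_, ?_⟩
    · have hne : 0 < k₁ ^ 2 + k₂ ^ 2 := by
        by_contra hcon
        have a1 : k₁ = 0 := by nlinarith [sq_nonneg k₁, sq_nonneg k₂]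
        have a2 : k₂ = 0 := by nlinarith [sq_nonneg k₁, sq_nonneg k₂]
        simp [a1, a2] at hbez
      have : 1 ≤ k₁ ^ 2 + k₂ ^ 2 := by lia
      exact_mod_cast this
    · rw [← Real.cos_zero]
      apply Real.cos_lt_cos_of_nonneg_of_le_pi le_rfl (by nlinarith) (by positivity)
    · intro x hx
      set y : ℝ := k₁ * x.2 - k₂ * x.1 - (k₁ * p.2 - k₂ * p.1) with hy
      have hge : ε' ≤ |y - round y| := by
        by_contra hcon
        push Not at hcon
        exact hx (hstrip x (round y) (hcon.trans_le (min_le_left _ _)))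
      have hle : |y - round y| ≤ 1 / 2 := abs_sub_round y
      have hc : cos (2 * π * y) = cos (2 * π * |y - round y|) := by
        have e : |2 * π * (y - round y)| = 2 * π * |y - round y| := by
          rw [abs_mul, abs_of_pos (by positivity : 0 < 2 * π)]
        have e' : 2 * π * (y - round y) = 2 * π * y - round y * (2 * π) := by ring
        rw [← e, Real.cos_abs, e', Real.cos_sub_int_mul_two_pi]
      rw [hc]
      apply Real.cos_le_cos_of_nonneg_of_le_pi (by positivity) (by nlinarith)
      gcongr

/-- A smooth `1`-periodic function bounded below by `1` that solves `e'' = 4π² e` away from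
`s₀ + ℤ`. -/
lemma exists_profile (s₀ : ℝ) {κ : ℝ} (hκ : κ < 1) :
    ∃ e : ℝ → ℝ, ContDiff ℝ (⊤ : ℕ∞) e ∧ Function.Periodic e 1 ∧ (∀ s, 1 ≤ e s) ∧
      ∃ κ' > κ, ∀ s, cos (2 * π * (s - s₀)) < κ' →
        deriv (deriv e) s - 4 * π ^ 2 * e s = 0 := by
  obtain ⟨κ₁, hκ₁, hκ₁'⟩ := exists_between hκ
  obtain ⟨κ₂, hκ₂, hκ₂'⟩ := exists_between hκ₁'
  set b : ℝ → ℝ := fun s =>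
    Real.smoothTransition ((κ₂ - cos (2 * π * (s - s₀))) / (κ₂ - κ₁)) with hb
  set e : ℝ → ℝ := fun s => b s * exp (2 * π * Int.fract (s - s₀)) + (1 - b s) with he
  have hbs : ContDiff ℝ (⊤ : ℕ∞) b := by
    refine Real.smoothTransition.contDiff.comp ?_
    refine ContDiff.div_const (contDiff_const.sub (Real.contDiff_cos.comp ?_)) _
    fun_prop
  have hpos : 0 < κ₂ - κ₁ := by linarith
  have hb1 : ∀ s, cos (2 * π * (s - s₀)) < κ₁ → b s = 1 := fun s hs =>
    Real.smoothTransition.one_of_one_le (by rw [le_div_iff₀ hpos]; linarith)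
  have hb0 : ∀ s, κ₂ < cos (2 * π * (s - s₀)) → b s = 0 := fun s hs =>
    Real.smoothTransition.zero_of_nonpos (div_nonpos_of_nonpos_of_nonneg (by linarith) hpos.le)
  have hcos : Continuous fun s : ℝ => cos (2 * π * (s - s₀)) := by fun_prop
  have hfl : ∀ s, (∀ k : ℤ, s - s₀ ≠ k) → ∀ᶠ u in nhds s, ⌊u - s₀⌋ = ⌊s - s₀⌋ := by
    intro s hs
    have h1 : (⌊s - s₀⌋ : ℝ) < s - s₀ := lt_of_le_of_ne (Int.floor_le _) (hs _).symm
    have h2 : s - s₀ < ⌊s - s₀⌋ + 1 := Int.lt_floor_add_one _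
    filter_upwards [Ioo_mem_nhds (show s₀ + ⌊s - s₀⌋ < s by linarith)
      (show s < s₀ + ⌊s - s₀⌋ + 1 by linarith)] with u hu
    rw [Int.floor_eq_iff]
    constructor <;> linarith [hu.1, hu.2]
  have hne : ∀ s, cos (2 * π * (s - s₀)) < 1 → ∀ k : ℤ, s - s₀ ≠ k := by
    intro s hs k hk
    rw [hk, mul_comm, Real.cos_int_mul_two_pi] at hs
    exact lt_irrefl _ hs
  have hexp : ∀ s, (∀ k : ℤ, s - s₀ ≠ k) →
      (fun u => exp (2 * π * Int.fract (u - s₀))) =ᶠ[nhds s]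
        fun u => exp (2 * π * (u - s₀ - ⌊s - s₀⌋)) := by
    intro s hs
    filter_upwards [hfl s hs] with u hu
    rw [Int.fract, hu]
  refine ⟨e, ?_, ?_, ?_, κ₁, hκ₁, ?_⟩
  · rw [contDiff_iff_contDiffAt]
    intro s
    by_cases hs : ∀ k : ℤ, s - s₀ ≠ k
    · have h1 : ContDiffAt ℝ (⊤ : ℕ∞) (fun u => exp (2 * π * Int.fract (u - s₀))) s := by
        refine ContDiffAt.congr_of_eventuallyEq ?_ (hexp s hs)
        fun_prop
      exact (hbs.contDiffAt.mul h1).add (contDiffAt_const.sub hbs.contDiffAt)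
    · push Not at hs
      obtain ⟨k, hk⟩ := hs
      have hev : e =ᶠ[nhds s] fun _ => 1 := by
        have : κ₂ < cos (2 * π * (s - s₀)) := by
          rw [hk, mul_comm, Real.cos_int_mul_two_pi]; exact hκ₂'
        filter_upwards [hcos.continuousAt.eventually (lt_mem_nhds this)] with u hu
        simp [he, hb0 u hu]
      exact contDiffAt_const.congr_of_eventuallyEq hev
  · intro s
    have h1 : cos (2 * π * (s + 1 - s₀)) = cos (2 * π * (s - s₀)) := by
      rw [show 2 * π * (s + 1 - s₀) = 2 * π * (s - s₀) + 2 * π by ring, Real.cos_add_two_pi]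
    have h2 : Int.fract (s + 1 - s₀) = Int.fract (s - s₀) := by
      rw [show s + 1 - s₀ = s - s₀ + 1 by ring, Int.fract_add_one]
    simp only [he, hb, h1, h2]
  · intro s
    have h1 : 1 ≤ exp (2 * π * Int.fract (s - s₀)) :=
      Real.one_le_exp (mul_nonneg (by positivity) (Int.fract_nonneg _))
    have h2 : 0 ≤ b s := Real.smoothTransition.nonneg _
    simp only [he]
    nlinarith
  · intro s hs
    have hs' := hne s (hs.trans (hκ₂.trans hκ₂'))
    have hev : e =ᶠ[nhds s] fun u => exp (2 * π * (u - s₀ - ⌊s - s₀⌋)) := by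
      filter_upwards [hcos.continuousAt.eventually (gt_mem_nhds hs), hexp s hs'] with u hu hu'
      rw [← hu']
      simp [he, hb1 u hu]
    have hd : ∀ a : ℝ, deriv (fun u => a * exp (2 * π * (u - s₀ - ⌊s - s₀⌋))) =
        fun u => a * (2 * π) * exp (2 * π * (u - s₀ - ⌊s - s₀⌋)) := by
      intro a
      funext u
      have h := ((((hasDerivAt_id u).sub_const s₀).sub_const
        (⌊s - s₀⌋ : ℝ)).const_mul (2 * π)).exp.const_mul a
      refine HasDerivAt.deriv (h.congr_deriv ?_)
      simp; ring
    have hd1 := hd 1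
    simp only [one_mul] at hd1
    rw [hev.deriv.deriv_eq, hev.eq_of_nhds, hd1, hd]
    ring

lemma exists_nat_near_int {y : ℕ → ℝ} {N : ℕ} {r : ℝ} (hdrop : y N ≤ y 0 - 1)
    (hstep : ∀ k < N, y k - y (k + 1) < r) (q : ℝ) :
    ∃ k ≤ N, ∃ m : ℤ, |y k - (q + m)| < r := by
  classical
  have h0 : q + ⌊y 0 - q⌋ ≤ y 0 := by linarith [Int.floor_le (y 0 - q)]
  have h1 : y 0 - 1 < q + ⌊y 0 - q⌋ := by linarith [Int.lt_floor_add_one (y 0 - q)]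
  have hex : ∃ k, y k < q + ⌊y 0 - q⌋ := ⟨N, by linarith⟩
  have hspec := Nat.find_spec hex
  have hle : Nat.find hex ≤ N := Nat.find_min' hex (by linarith)
  obtain ⟨j, hj⟩ : ∃ j, Nat.find hex = j + 1 := by
    refine Nat.exists_eq_succ_of_ne_zero fun h => ?_
    rw [h] at hspec
    linarith
  have hjn := Nat.find_min hex (show j < Nat.find hex by lia)
  push Not at hjn
  refine ⟨Nat.find hex, hle, ⌊y 0 - q⌋, ?_⟩
  have hst := hstep j (by lia)
  rw [hj] at hspec ⊢
  rw [abs_lt]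
  constructor <;> linarith

/-- Large circles come arbitrarily close to every point of the torus. -/
lemma exists_circle_mem_ballT2 {r : ℝ} (hr : 0 < r) :
    ∃ ρ₀ > (0 : ℝ), ∀ ρ ≥ ρ₀, ∀ z x₀ : V2, ∃ u w : ℝ, u ^ 2 + w ^ 2 = ρ ^ 2 ∧
      (z.1 + u, z.2 + w) ∈ ballT2 x₀ r := by
  set l : ℝ := min (1 / 2) (r / 4) with hl
  have hl0 : 0 < l := by positivity
  have hl1 : l ≤ 1 / 2 := min_le_left _ _
  have hl2 : l ≤ r / 4 := min_le_right _ _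
  refine ⟨8 / l ^ 2, by positivity, fun ρ hρ z x₀ => ?_⟩
  have hρ' : 8 ≤ ρ * l ^ 2 := by rwa [ge_iff_le, div_le_iff₀ (by positivity)] at hρ
  have hρ0 : 0 < ρ := lt_of_lt_of_le (by positivity) hρ
  have hlρ : 4 ≤ l * ρ := by nlinarith [mul_pos hl0 hρ0]
  set f : ℝ := Int.fract (x₀.1 - z.1) with hf
  have hf0 : 0 ≤ f := Int.fract_nonneg _
  have hf1 : f < 1 := Int.fract_lt_one _
  set N : ℕ := ⌊l * ρ - 1⌋₊ with hN
  have hNle : (N : ℝ) ≤ l * ρ - 1 := Nat.floor_le (by linarith)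
  have hNge : l * ρ - 2 < N := by linarith [Nat.lt_floor_add_one (l * ρ - 1)]
  set h : ℝ → ℝ := fun s => √(ρ ^ 2 - s ^ 2) with hh
  have hnn : ∀ s, 0 ≤ s → s ≤ l * ρ → ρ ^ 2 / 4 ≤ ρ ^ 2 - s ^ 2 := by
    intro s hs hs'
    have : s ≤ ρ / 2 := by nlinarith
    nlinarith
  have hsq : ∀ s, 0 ≤ s → s ≤ l * ρ → h s ^ 2 = ρ ^ 2 - s ^ 2 := fun s hs hs' =>
    Real.sq_sqrt (by nlinarith [hnn s hs hs'])
  have hlow : ∀ s, 0 ≤ s → s ≤ l * ρ → ρ / 2 ≤ h s := fun s hs hs' =>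
    Real.le_sqrt_of_sq_le (by nlinarith [hnn s hs hs'])
  have hup : ∀ s, h s ≤ ρ := fun s => by
    rw [hh]
    exact Real.sqrt_le_iff.2 ⟨hρ0.le, by nlinarith [sq_nonneg s]⟩
  have hdrop : h (f + N) ≤ h (f + (0 : ℕ)) - 1 := by
    push_cast
    rw [add_zero]
    have e1 := hsq f hf0 (by linarith)
    have e2 := hsq (f + N) (by positivity) (by linarith)
    have e3 : (h f - h (f + N)) * (h f + h (f + N)) = 2 * f * N + N ^ 2 := by
      linear_combination e1 - e2
    have hN2 : l * ρ / 2 ≤ N := by linarith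
    have e4 : 2 * ρ ≤ (N : ℝ) ^ 2 := by
      have : (l * ρ / 2) ^ 2 ≤ (N : ℝ) ^ 2 := by gcongr
      nlinarith
    have e5 := hlow f hf0 (by linarith)
    have e6 := hlow (f + N) (by positivity) (by linarith)
    have e7 : 0 ≤ f * N := by positivity
    by_contra hcon
    push Not at hcon
    have e8 : (h f - h (f + N)) * (h f + h (f + N)) < 1 * (h f + h (f + N)) :=
      mul_lt_mul_of_pos_right (by linarith) (by linarith)
    linarith [hup f, hup (f + N)]
  have hstep : ∀ k < N, h (f + k) - h (f + (k + 1 : ℕ)) < r := by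
    intro k hk
    have hk' : (k : ℝ) + 1 ≤ N := by exact_mod_cast hk
    have hk0 : (0 : ℝ) ≤ k := by positivity
    push_cast
    have e1 := hsq (f + k) (by positivity) (by linarith)
    have e2 := hsq (f + (k + 1)) (by positivity) (by linarith)
    have e3 : (h (f + k) - h (f + (k + 1))) * (h (f + k) + h (f + (k + 1))) =
        2 * (f + k) + 1 := by
      linear_combination e1 - e2
    have e5 := hlow (f + k) (by positivity) (by linarith)
    have e6 := hlow (f + (k + 1)) (by positivity) (by linarith)
    by_contra hcon
    push Not at hcon
    have e7 : r * ρ ≤ (h (f + k) - h (f + (k + 1))) * (h (f + k) + h (f + (k + 1))) :=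
      mul_le_mul hcon (by linarith) hρ0.le (by linarith)
    nlinarith
  obtain ⟨k, hk, m, hm⟩ := exists_nat_near_int (y := fun k : ℕ => h (f + k)) hdrop hstep
    (x₀.2 - z.2)
  have hk' : (k : ℝ) ≤ N := by exact_mod_cast hk
  refine ⟨f + k, h (f + k), ?_, -⌊x₀.1 - z.1⌋ + k, m, ?_⟩
  · rw [hsq (f + k) (by positivity) (by linarith)]; ring
  · have e1 : z.1 + (f + k) - (x₀.1 + ((-⌊x₀.1 - z.1⌋ + k : ℤ) : ℝ)) = 0 := by
      rw [hf, Int.fract]; push_cast; ring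
    simp only [en, e1]
    rw [zero_pow two_ne_zero, zero_add, Real.sqrt_sq_eq_abs]
    convert hm using 2
    ring

lemma exists_rotation {a b p q : ℝ} (h : p ^ 2 + q ^ 2 = a ^ 2 + b ^ 2)
    (hpos : 0 < a ^ 2 + b ^ 2) :
    ∃ θ : ℝ, 0 ≤ θ ∧ θ ≤ 2 * π ∧ p = a * cos θ + b * sin θ ∧ q = b * cos θ - a * sin θ := by
  set ρ := a ^ 2 + b ^ 2 with hρ
  set z : ℂ := ⟨(p * a + q * b) / ρ, (p * b - q * a) / ρ⟩ with hz
  have hz1 : ‖z‖ = 1 := by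
    have : ‖z‖ ^ 2 = 1 := by
      rw [← Complex.normSq_eq_norm_sq, Complex.normSq_apply, hz]
      field_simp
      rw [hρ] at h ⊢
      linear_combination (a ^ 2 + b ^ 2) * h
    nlinarith [norm_nonneg z]
  have hz0 : z ≠ 0 := fun h0 => by simp [h0] at hz1
  have hc : cos (Complex.arg z) = (p * a + q * b) / ρ := by
    rw [Complex.cos_arg hz0, hz1, hz]; simp
  have hs : sin (Complex.arg z) = (p * b - q * a) / ρ := by
    rw [Complex.sin_arg, hz1, hz]; simp
  have hp : p = a * cos (Complex.arg z) + b * sin (Complex.arg z) := by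
    rw [hc, hs]; field_simp; rw [hρ]; ring
  have hq : q = b * cos (Complex.arg z) - a * sin (Complex.arg z) := by
    rw [hc, hs]; field_simp; rw [hρ]; ring
  rcases le_or_gt 0 (Complex.arg z) with h0 | h0
  · exact ⟨_, h0, by linarith [Complex.arg_le_pi z, Real.pi_pos], hp, hq⟩
  · refine ⟨Complex.arg z + 2 * π, by linarith [Complex.neg_pi_lt_arg z], by linarith, ?_, ?_⟩
    · rwa [Real.cos_add_two_pi, Real.sin_add_two_pi]
    · rwa [Real.cos_add_two_pi, Real.sin_add_two_pi]

lemma HasDerivAt.fst_comp {f : ℝ → V2} {f' : V2} {t : ℝ} (h : HasDerivAt f f' t) :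
    HasDerivAt (fun s => (f s).1) f'.1 t :=
  (ContinuousLinearMap.fst ℝ ℝ ℝ).hasFDerivAt.comp_hasDerivAt t h

lemma HasDerivAt.snd_comp {f : ℝ → V2} {f' : V2} {t : ℝ} (h : HasDerivAt f f' t) :
    HasDerivAt (fun s => (f s).2) f'.2 t :=
  (ContinuousLinearMap.snd ℝ ℝ ℝ).hasFDerivAt.comp_hasDerivAt t h

lemma HasDerivAt.pperp {f : ℝ → V2} {f' : V2} {t : ℝ} (h : HasDerivAt f f' t) :
    HasDerivAt (fun s => pperp (f s)) (pperp f') t :=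
  h.snd_comp.prodMk h.fst_comp.fun_neg

lemma eq_of_hasDerivAt_zero {E : Type*} [NormedAddCommGroup E] [NormedSpace ℝ E] {f : ℝ → E}
    {a b : ℝ} (h : ∀ t ∈ Set.Icc a b, HasDerivAt f 0 t) : ∀ t ∈ Set.Icc a b, f t = f a :=
  constant_of_has_deriv_right_zero (fun t ht => (h t ht).continuousAt.continuousWithinAt)
    fun t ht => (h t (Set.Ico_subset_Icc_self ht)).hasDerivWithinAt

lemma en_nonneg (v : V2) : 0 ≤ en v := Real.sqrt_nonneg _

lemma en_sq (v : V2) : en v ^ 2 = v.1 ^ 2 + v.2 ^ 2 := Real.sq_sqrt (by positivity)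

lemma norm_le_en (v : V2) : ‖v‖ ≤ en v := by
  rw [Prod.norm_def, max_le_iff, Real.norm_eq_abs, Real.norm_eq_abs]
  exact ⟨Real.abs_le_sqrt (by nlinarith [sq_nonneg v.2]),
    Real.abs_le_sqrt (by nlinarith [sq_nonneg v.1])⟩

lemma norm_pperp (v : V2) : ‖pperp v‖ = ‖v‖ := by
  simp [pperp, Prod.norm_def, max_comm]

/-- The Lorentz factor. -/
def lorentz (c : ℝ) (v : V2) : ℝ := √(1 + (v.1 ^ 2 + v.2 ^ 2) / c ^ 2)

lemma one_le_lorentz (c : ℝ) (v : V2) : 1 ≤ lorentz c v :=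
  Real.one_le_sqrt.2 (le_add_of_nonneg_right (by positivity))

lemma lorentz_pos (c : ℝ) (v : V2) : 0 < lorentz c v := one_pos.trans_le (one_le_lorentz c v)

lemma vhat_eq (c : ℝ) (v : V2) : vhat c v = (lorentz c v)⁻¹ • v := by
  rw [vhat, lorentz, one_div]

lemma lorentz_sub_one_le {c S : ℝ} (hc : 0 < c) {v : V2} (hv : en v ≤ S) :
    lorentz c v - 1 ≤ S ^ 2 / c ^ 2 := by
  have h1 : lorentz c v ^ 2 = 1 + en v ^ 2 / c ^ 2 := by
    rw [lorentz, en_sq, Real.sq_sqrt (by positivity)]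
  have h2 : en v ^ 2 / c ^ 2 ≤ S ^ 2 / c ^ 2 := by
    have := en_nonneg v
    gcongr
  nlinarith [one_le_lorentz c v]

lemma norm_vhat_le (c : ℝ) (v : V2) : ‖vhat c v‖ ≤ ‖v‖ := by
  rw [vhat_eq, norm_smul, norm_inv, Real.norm_of_nonneg (lorentz_pos c v).le]
  exact mul_le_of_le_one_left (norm_nonneg _) (inv_le_one_of_one_le₀ (one_le_lorentz c v))

section FreeMotion

variable {c 𝔟 a b : ℝ} {X V : ℝ → V2}

lemma en_eq_of_free (hV : ∀ t ∈ Set.Icc a b, HasDerivAt V (𝔟 • pperp (vhat c (V t))) t) :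
    ∀ t ∈ Set.Icc a b, en (V t) = en (V a) := by
  intro t ht
  have h : ∀ t ∈ Set.Icc a b, HasDerivAt (fun s => (V s).1 ^ 2 + (V s).2 ^ 2) 0 t := by
    intro t ht
    refine (((hV t ht).fst_comp.pow 2).add ((hV t ht).snd_comp.pow 2)).congr_deriv ?_
    simp [pperp, vhat_eq]
    ring
  rw [en, en, eq_of_hasDerivAt_zero h t ht]

lemma sub_pperp_eq_of_free (hX : ∀ t ∈ Set.Icc a b, HasDerivAt X (vhat c (V t)) t)
    (hV : ∀ t ∈ Set.Icc a b, HasDerivAt V (𝔟 • pperp (vhat c (V t))) t) :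
    ∀ t ∈ Set.Icc a b, V t - 𝔟 • pperp (X t) = V a - 𝔟 • pperp (X a) :=
  eq_of_hasDerivAt_zero (f := fun t => V t - 𝔟 • pperp (X t)) fun t ht =>
    ((hV t ht).fun_sub ((hX t ht).pperp.fun_const_smul 𝔟)).congr_deriv (sub_self _)

lemma velocity_eq_of_free (hV : ∀ t ∈ Set.Icc a b, HasDerivAt V (𝔟 • pperp (vhat c (V t))) t)
    {t : ℝ} (ht : t ∈ Set.Icc a b) :
    V t = ((V a).1 * cos (𝔟 / lorentz c (V a) * (t - a))
          + (V a).2 * sin (𝔟 / lorentz c (V a) * (t - a)),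
        (V a).2 * cos (𝔟 / lorentz c (V a) * (t - a))
          - (V a).1 * sin (𝔟 / lorentz c (V a) * (t - a))) := by
  set w := 𝔟 / lorentz c (V a) with hw
  have hV' : ∀ t ∈ Set.Icc a b, HasDerivAt V (w • pperp (V t)) t := by
    intro t ht
    refine (hV t ht).congr_deriv ?_
    have hl : lorentz c (V t) = lorentz c (V a) := by
      rw [lorentz, lorentz, ← en_sq, ← en_sq, en_eq_of_free hV t ht]
    rw [vhat_eq, hl, hw]
    ext <;> simp [pperp] <;> ring
  have hang : ∀ t, HasDerivAt (fun s => w * (s - a)) w t := fun t => by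
    simpa using ((hasDerivAt_id t).sub_const a).const_mul w
  have h1 : ∀ t ∈ Set.Icc a b, HasDerivAt
      (fun s => (V s).1 * cos (w * (s - a)) - (V s).2 * sin (w * (s - a))) 0 t := by
    intro t ht
    refine (((hV' t ht).fst_comp.fun_mul (hang t).cos).fun_sub
      ((hV' t ht).snd_comp.fun_mul (hang t).sin)).congr_deriv ?_
    simp [pperp]; ring
  have h2 : ∀ t ∈ Set.Icc a b, HasDerivAt
      (fun s => (V s).1 * sin (w * (s - a)) + (V s).2 * cos (w * (s - a))) 0 t := by
    intro t ht
    refine (((hV' t ht).fst_comp.fun_mul (hang t).sin).fun_add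
      ((hV' t ht).snd_comp.fun_mul (hang t).cos)).congr_deriv ?_
    simp [pperp]; ring
  have e1 := eq_of_hasDerivAt_zero h1 t ht
  have e2 := eq_of_hasDerivAt_zero h2 t ht
  simp only [sub_self, mul_zero, cos_zero, sin_zero, mul_one, sub_zero, zero_add] at e1 e2
  have e3 := sin_sq_add_cos_sq (w * (t - a))
  ext
  · simp only
    linear_combination cos (w * (t - a)) * e1 + sin (w * (t - a)) * e2 - (V t).1 * e3
  · simp only
    linear_combination cos (w * (t - a)) * e2 - sin (w * (t - a)) * e1 - (V t).2 * e3

/-- A fast particle in free cyclotron motion visits every prescribed ball of the torus. -/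
lemma exists_mem_ballT2_of_free {r ρ₀ : ℝ} {x₀ : V2} (h𝔟 : 𝔟 ≠ 0)
    (hρ₀ : ∀ ρ ≥ ρ₀, ∀ z x₀ : V2, ∃ u w : ℝ, u ^ 2 + w ^ 2 = ρ ^ 2 ∧
      (z.1 + u, z.2 + w) ∈ ballT2 x₀ r)
    (hab : a + 2 * (2 * π / |𝔟|) ≤ b)
    (hX : ∀ t ∈ Set.Icc a b, HasDerivAt X (vhat c (V t)) t)
    (hV : ∀ t ∈ Set.Icc a b, HasDerivAt V (𝔟 • pperp (vhat c (V t))) t)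
    (hfast : |𝔟| * ρ₀ ≤ en (V a)) (hpos : 0 < en (V a)) (hl : lorentz c (V a) ≤ 2) :
    ∃ t ∈ Set.Icc a b, X t ∈ ballT2 x₀ r := by
  have hb0 : 0 < |𝔟| := abs_pos.2 h𝔟
  set K : V2 := V a - 𝔟 • pperp (X a) with hK
  obtain ⟨u, w, huw, hmem⟩ := hρ₀ (en (V a) / |𝔟|)
    (by rw [ge_iff_le, le_div_iff₀ hb0]; linarith) (K.2 / 𝔟, -K.1 / 𝔟) x₀
  have hpq : (𝔟 * w) ^ 2 + (-(𝔟 * u)) ^ 2 = (V a).1 ^ 2 + (V a).2 ^ 2 := by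
    rw [← en_sq]
    rw [div_pow, sq_abs, eq_div_iff (by positivity)] at huw
    linear_combination huw
  obtain ⟨θ, hθ0, hθ1, hp, hq⟩ := exists_rotation hpq (by rw [← en_sq]; positivity)
  have hlp := lorentz_pos c (V a)
  obtain ⟨s, hs0, hs1, hcos, hsin⟩ : ∃ s : ℝ, 0 ≤ s ∧ s ≤ 2 * (2 * π / |𝔟|) ∧
      cos (𝔟 / lorentz c (V a) * s) = cos θ ∧ sin (𝔟 / lorentz c (V a) * s) = sin θ := by
    have key : ∀ x : ℝ, 0 ≤ x → x ≤ 2 * π → 0 ≤ x * lorentz c (V a) / |𝔟| ∧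
        x * lorentz c (V a) / |𝔟| ≤ 2 * (2 * π / |𝔟|) := by
      intro x hx hx'
      refine ⟨by positivity, ?_⟩
      rw [← mul_div_assoc]
      refine div_le_div_of_nonneg_right ?_ hb0.le
      nlinarith
    rcases lt_or_gt_of_ne h𝔟 with hneg | hpos
    · obtain ⟨k1, k2⟩ := key (2 * π - θ) (by linarith) (by linarith)
      have e : 𝔟 / lorentz c (V a) * ((2 * π - θ) * lorentz c (V a) / |𝔟|) = θ - 2 * π := by
        rw [abs_of_neg hneg]
        have : lorentz c (V a) ≠ 0 := hlp.ne'
        field_simp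
        ring
      exact ⟨_, k1, k2, by rw [e, cos_sub_two_pi], by rw [e, sin_sub_two_pi]⟩
    · obtain ⟨k1, k2⟩ := key θ hθ0 hθ1
      have e : 𝔟 / lorentz c (V a) * (θ * lorentz c (V a) / |𝔟|) = θ := by
        rw [abs_of_pos hpos]
        have : lorentz c (V a) ≠ 0 := hlp.ne'
        field_simp
      exact ⟨_, k1, k2, by rw [e], by rw [e]⟩
  have ht : a + s ∈ Set.Icc a b := ⟨by linarith, by linarith⟩
  refine ⟨a + s, ht, ?_⟩
  have hv := velocity_eq_of_free hV ht
  rw [add_sub_cancel_left, hcos, hsin, ← hp, ← hq] at hv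
  have hk := sub_pperp_eq_of_free hX hV _ ht
  rw [← hK, hv] at hk
  have k1 : 𝔟 * w - 𝔟 * (X (a + s)).2 = K.1 := by rw [← hk]; simp [pperp]
  have k2 : -(𝔟 * u) + 𝔟 * (X (a + s)).1 = K.2 := by rw [← hk]; simp [pperp]
  convert hmem using 1
  ext
  · simp only; rw [← k2]; field_simp; ring
  · simp only; rw [← k1]; field_simp; ring

/-- After two non-relativistic cyclotron periods a slow particle almost returns. -/
lemma norm_sub_le_of_free {M : ℝ} (h𝔟 : 𝔟 ≠ 0) (hc : 0 < c)
    (hb : b = a + 2 * (2 * π / |𝔟|))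
    (hX : ∀ t ∈ Set.Icc a b, HasDerivAt X (vhat c (V t)) t)
    (hV : ∀ t ∈ Set.Icc a b, HasDerivAt V (𝔟 • pperp (vhat c (V t))) t)
    (hM : en (V a) ≤ M) :
    ‖X b - X a‖ ≤ 8 * π * M ^ 3 / (|𝔟| * c ^ 2) := by
  have hb0 : 0 < |𝔟| := abs_pos.2 h𝔟
  have hM0 : 0 ≤ M := (en_nonneg _).trans hM
  have hbm : b ∈ Set.Icc a b := 
    ⟨by rw [hb]; linarith [show 0 ≤ 2 * (2 * π / |𝔟|) by positivity], le_rfl⟩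
  have hl := one_le_lorentz c (V a)
  have hl' := lorentz_sub_one_le hc hM
  set g := lorentz c (V a) with hg
  set ξ : ℝ := 4 * π * (1 - 1 / g) with hξ
  have hg1 : 1 - 1 / g ≤ g - 1 := by
    have : 0 < g := by linarith
    have h2 : 0 ≤ (g - 1) ^ 2 / g := by positivity
    have h3 : (g - 1) ^ 2 / g = g - 2 + 1 / g := by field_simp; ring
    rw [h3] at h2
    linarith
  have hξ0 : 0 ≤ ξ := by
    have : 1 / g ≤ 1 := by rw [div_le_one (by linarith)]; exact hl
    rw [hξ]
    have := Real.pi_pos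
    apply mul_nonneg (by positivity)
    linarith
  have hξ1 : ξ ≤ 4 * π * (M ^ 2 / c ^ 2) := by
    rw [hξ]; gcongr; linarith
  have hv := velocity_eq_of_free hV hbm
  rw [← hg] at hv
  have hcs : cos (𝔟 / g * (b - a)) = cos ξ ∧ |sin (𝔟 / g * (b - a))| = |sin ξ| := by
    have hba : b - a = 4 * π / |𝔟| := by rw [hb]; ring
    have hg0 : g ≠ 0 := by linarith
    rcases lt_or_gt_of_ne h𝔟 with hneg | hpos
    · have e : 𝔟 / g * (b - a) = ξ - (2 : ℕ) * (2 * π) := by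
        rw [hba, abs_of_neg hneg, hξ]; push_cast; field_simp; ring
      rw [e, cos_sub_nat_mul_two_pi, sin_sub_nat_mul_two_pi]
      exact ⟨rfl, rfl⟩
    · have e : 𝔟 / g * (b - a) = (2 : ℕ) * (2 * π) - ξ := by
        rw [hba, abs_of_pos hpos, hξ]; push_cast; field_simp; ring
      rw [e, cos_nat_mul_two_pi_sub, sin_nat_mul_two_pi_sub, abs_neg]
      exact ⟨rfl, rfl⟩
  have hcos : |cos (𝔟 / g * (b - a)) - 1| ≤ ξ := by
    rw [hcs.1]
    have := Real.abs_cos_sub_cos_le ξ 0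
    rwa [cos_zero, sub_zero, abs_of_nonneg hξ0] at this
  have hsin : |sin (𝔟 / g * (b - a))| ≤ ξ := by
    rw [hcs.2]
    exact Real.abs_sin_le_abs.trans_eq (abs_of_nonneg hξ0)
  have hcomp : |(V a).1| ≤ M ∧ |(V a).2| ≤ M := by
    have := (norm_le_en (V a)).trans hM
    rwa [Prod.norm_def, max_le_iff] at this
  have hmulle : ∀ {x y : ℝ}, |x| ≤ M → |y| ≤ ξ → |x * y| ≤ M * ξ := by
    intro x y hx hy
    rw [abs_mul]
    exact mul_le_mul hx hy (abs_nonneg _) hM0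
  have hVd : ‖V b - V a‖ ≤ 2 * M * ξ := by
    rw [Prod.norm_def, max_le_iff, Real.norm_eq_abs, Real.norm_eq_abs]
    have a1 := hmulle hcomp.1 hcos
    have a2 := hmulle hcomp.2 hsin
    have a3 := hmulle hcomp.2 hcos
    have a4 := hmulle hcomp.1 hsin
    constructor
    · rw [hv]
      have : ((V a).1 * cos (𝔟 / g * (b - a)) + (V a).2 * sin (𝔟 / g * (b - a))) - (V a).1 =
        (V a).1 * (cos (𝔟 / g * (b - a)) - 1) + (V a).2 * sin (𝔟 / g * (b - a)) := by ring
      simp only [Prod.fst_sub]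
      rw [this]
      linarith [abs_add_le ((V a).1 * (cos (𝔟 / g * (b - a)) - 1))
        ((V a).2 * sin (𝔟 / g * (b - a)))]
    · rw [hv]
      have : ((V a).2 * cos (𝔟 / g * (b - a)) - (V a).1 * sin (𝔟 / g * (b - a))) - (V a).2 =
        (V a).2 * (cos (𝔟 / g * (b - a)) - 1) - (V a).1 * sin (𝔟 / g * (b - a)) := by ring
      simp only [Prod.snd_sub]
      rw [this]
      linarith [abs_sub ((V a).2 * (cos (𝔟 / g * (b - a)) - 1))
        ((V a).1 * sin (𝔟 / g * (b - a)))]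
  have hk := sub_pperp_eq_of_free hX hV b hbm
  have hk' : 𝔟 • pperp (X b - X a) = V b - V a := by
    have : pperp (X b - X a) = pperp (X b) - pperp (X a) := by ext <;> simp [pperp]; ring
    rw [this, smul_sub]
    exact (sub_eq_sub_iff_sub_eq_sub.1 hk).symm
  have hn : |𝔟| * ‖X b - X a‖ ≤ 2 * M * ξ := by
    rw [← norm_pperp, ← Real.norm_eq_abs, ← norm_smul, hk']
    exact hVd
  rw [le_div_iff₀ (by positivity)]
  calc ‖X b - X a‖ * (|𝔟| * c ^ 2) = (|𝔟| * ‖X b - X a‖) * c ^ 2 := by ring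
    _ ≤ 2 * M * (4 * π * (M ^ 2 / c ^ 2)) * c ^ 2 := by
        refine mul_le_mul_of_nonneg_right (hn.trans ?_) (by positivity)
        gcongr
    _ = 8 * π * M ^ 3 := by field_simp; ring

end FreeMotion

/-- A smooth nonnegative pulse of unit mass supported in `[a, a + τ]`. -/
def pulse (a τ t : ℝ) : ℝ := deriv Real.smoothTransition ((t - a) / τ) / τ

lemma contDiff_deriv_of_contDiff {f : ℝ → ℝ} (hf : ContDiff ℝ (⊤ : ℕ∞) f) :
    ContDiff ℝ (⊤ : ℕ∞) (deriv f) :=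
  ((contDiff_succ_iff_deriv (n := ((⊤ : ℕ∞) : WithTop ℕ∞))).1 hf).2.2

lemma contDiff_pulse (a τ : ℝ) : ContDiff ℝ (⊤ : ℕ∞) (pulse a τ) :=
  ((contDiff_deriv_of_contDiff Real.smoothTransition.contDiff).comp
    ((contDiff_id.sub contDiff_const).div_const τ)).div_const τ

lemma hasDerivAt_smoothTransition_comp (a τ t : ℝ) :
    HasDerivAt (fun s => Real.smoothTransition ((s - a) / τ)) (pulse a τ t) t := by
  have h1 : HasDerivAt Real.smoothTransition
      (deriv Real.smoothTransition ((t - a) / τ)) ((t - a) / τ) :=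
    ((Real.smoothTransition.contDiff (n := 1)).differentiable
      one_ne_zero).differentiableAt.hasDerivAt
  have h2 : HasDerivAt (fun s => (s - a) / τ) (1 / τ) t :=
    ((hasDerivAt_id t).sub_const a).div_const τ
  refine (h1.comp t h2).congr_deriv ?_
  rw [pulse, mul_one_div]

lemma pulse_nonneg (a t : ℝ) {τ : ℝ} (hτ : 0 < τ) : 0 ≤ pulse a τ t :=
  div_nonneg Real.smoothTransition.monotone.deriv_nonneg hτ.le

lemma deriv_smoothTransition_eq_zero {x : ℝ} (hx : x ≤ 0 ∨ 1 ≤ x) :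
    deriv Real.smoothTransition x = 0 := by
  have hc : Continuous (deriv Real.smoothTransition) :=
    (contDiff_deriv_of_contDiff Real.smoothTransition.contDiff).continuous
  have hcl : IsClosed {x | deriv Real.smoothTransition x = 0} := isClosed_eq hc continuous_const
  rcases hx with hx | hx
  · have : Set.Iio (0 : ℝ) ⊆ {x | deriv Real.smoothTransition x = 0} := by
      intro y hy
      have : Real.smoothTransition =ᶠ[nhds y] fun _ => 0 := by
        filter_upwards [Iio_mem_nhds hy] with u hu
        exact Real.smoothTransition.zero_of_nonpos (le_of_lt hu)
      simp [this.deriv_eq]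
    have h := hcl.closure_subset_iff.2 this
    rw [closure_Iio] at h
    exact h hx
  · have : Set.Ioi (1 : ℝ) ⊆ {x | deriv Real.smoothTransition x = 0} := by
      intro y hy
      have : Real.smoothTransition =ᶠ[nhds y] fun _ => 1 := by
        filter_upwards [Ioi_mem_nhds hy] with u hu
        exact Real.smoothTransition.one_of_one_le (le_of_lt hu)
      simp [this.deriv_eq]
    have h := hcl.closure_subset_iff.2 this
    rw [closure_Ioi] at h
    exact h hx

lemma pulse_eq_zero {a τ t : ℝ} (hτ : 0 < τ) (ht : t ≤ a ∨ a + τ ≤ t) : pulse a τ t = 0 := by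
  rw [pulse, deriv_smoothTransition_eq_zero, zero_div]
  rcases ht with ht | ht
  · exact Or.inl (div_nonpos_of_nonpos_of_nonneg (by linarith) hτ.le)
  · exact Or.inr (by rw [le_div_iff₀ hτ]; linarith)

lemma deriv_pulse_eq_zero {a τ t : ℝ} (hτ : 0 < τ) (ht : t < a ∨ a + τ < t) :
    deriv (pulse a τ) t = 0 := by
  have : pulse a τ =ᶠ[nhds t] fun _ => 0 := by
    rcases ht with ht | ht
    · filter_upwards [Iio_mem_nhds ht] with u hu
      exact pulse_eq_zero hτ (Or.inl (le_of_lt hu))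
    · filter_upwards [Ioi_mem_nhds ht] with u hu
      exact pulse_eq_zero hτ (Or.inr (le_of_lt hu))
  simp [this.deriv_eq]

section Kick

variable {c 𝔟 a τ C L : ℝ} {g : V2 → V2} {X V : ℝ → V2}

lemma en_le_of_kick (hτ : 0 < τ) (hC : ∀ x, ‖g x‖ ≤ C)
    (hV : ∀ t ∈ Set.Icc a (a + τ),
      HasDerivAt V (pulse a τ t • g (X t) + 𝔟 • pperp (vhat c (V t))) t) :
    ∀ t ∈ Set.Icc a (a + τ), en (V t) ≤ en (V a) + 1 + 2 * C := by
  intro t ht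
  have hC0 : 0 ≤ C := (norm_nonneg _).trans (hC 0)
  set N : ℝ → ℝ := fun s => √(1 + ((V s).1 ^ 2 + (V s).2 ^ 2)) with hN
  have hNpos : ∀ s, 0 < N s := fun s => Real.sqrt_pos.2 (by positivity)
  have hNen : ∀ s, en (V s) ≤ N s := fun s => Real.sqrt_le_sqrt (by linarith)
  have hNd : ∀ s ∈ Set.Icc a (a + τ), HasDerivAt N
      (pulse a τ s * (((V s).1 * (g (X s)).1 + (V s).2 * (g (X s)).2) / N s)) s := by
    intro s hs
    have h := ((((hV s hs).fst_comp.fun_pow 2).fun_add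
      ((hV s hs).snd_comp.fun_pow 2)).const_add 1).sqrt
      (show 1 + ((V s).1 ^ 2 + (V s).2 ^ 2) ≠ 0 by positivity)
    refine h.congr_deriv ?_
    have hne : N s ≠ 0 := (hNpos s).ne'
    simp only [hN] at hne ⊢
    simp [pperp, vhat_eq]
    field_simp
    ring
  have hle := image_le_of_deriv_right_le_deriv_boundary (f := N) (a := a) (b := a + τ)
    (B := fun s => N a + 2 * C * Real.smoothTransition ((s - a) / τ))
    (B' := fun s => 2 * C * pulse a τ s)
    (fun s hs => (hNd s hs).continuousAt.continuousWithinAt)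
    (fun s hs => (hNd s (Set.Ico_subset_Icc_self hs)).hasDerivWithinAt)
    (by simp [Real.smoothTransition.zero])
    (fun s hs => (((hasDerivAt_smoothTransition_comp a τ s).const_mul
      (2 * C)).const_add (N a)).continuousAt.continuousWithinAt)
    (fun s hs => (((hasDerivAt_smoothTransition_comp a τ s).const_mul
      (2 * C)).const_add (N a)).hasDerivWithinAt)
    (fun s hs => ?_) ht
  · have h1 : N a ≤ en (V a) + 1 := by
      rw [hN]
      refine Real.sqrt_le_iff.2 ⟨by linarith [en_nonneg (V a)], ?_⟩
      nlinarith [en_sq (V a), en_nonneg (V a)]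
    have h2 := Real.smoothTransition.le_one ((t - a) / τ)
    have h3 : 2 * C * Real.smoothTransition ((t - a) / τ) ≤ 2 * C * 1 := by gcongr
    linarith [hNen t]
  · rw [mul_comm (2 * C)]
    refine mul_le_mul_of_nonneg_left ?_ (pulse_nonneg a s hτ)
    rw [div_le_iff₀ (hNpos s)]
    have hVn : ‖V s‖ ≤ N s := (norm_le_en _).trans (hNen s)
    have hgn := hC (X s)
    rw [Prod.norm_def, max_le_iff, Real.norm_eq_abs, Real.norm_eq_abs] at hVn hgn
    have k1 : (V s).1 * (g (X s)).1 ≤ N s * C := by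
      refine (le_abs_self _).trans ?_
      rw [abs_mul]
      exact mul_le_mul hVn.1 hgn.1 (abs_nonneg _) (hNpos s).le
    have k2 : (V s).2 * (g (X s)).2 ≤ N s * C := by
      refine (le_abs_self _).trans ?_
      rw [abs_mul]
      exact mul_le_mul hVn.2 hgn.2 (abs_nonneg _) (hNpos s).le
    linarith

lemma norm_sub_le_of_kick {S : ℝ}
    (hX : ∀ t ∈ Set.Icc a (a + τ), HasDerivAt X (vhat c (V t)) t)
    (hS : ∀ t ∈ Set.Icc a (a + τ), en (V t) ≤ S) :
    ∀ t ∈ Set.Icc a (a + τ), ‖X t - X a‖ ≤ S * τ := by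
  intro t ht
  have h := norm_image_sub_le_of_norm_deriv_le_segment'
    (fun s hs => (hX s hs).hasDerivWithinAt)
    (fun s hs => (norm_vhat_le c (V s)).trans ((norm_le_en _).trans
      (hS s (Set.Ico_subset_Icc_self hs)))) t ht
  refine h.trans ?_
  have : 0 ≤ S := (en_nonneg _).trans (hS t ht)
  gcongr
  linarith [ht.2]

lemma norm_velocity_sub_le_of_kick {S : ℝ} (hτ : 0 < τ) (hL0 : 0 ≤ L)
    (hL : ∀ x y, ‖g x - g y‖ ≤ L * ‖x - y‖)
    (hX : ∀ t ∈ Set.Icc a (a + τ), HasDerivAt X (vhat c (V t)) t)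
    (hV : ∀ t ∈ Set.Icc a (a + τ),
      HasDerivAt V (pulse a τ t • g (X t) + 𝔟 • pperp (vhat c (V t))) t)
    (hS : ∀ t ∈ Set.Icc a (a + τ), en (V t) ≤ S) :
    ‖V (a + τ) - V a - g (X a)‖ ≤ (L + |𝔟|) * (S * τ) := by
  have hXd := norm_sub_le_of_kick hX hS
  have hend : a + τ ∈ Set.Icc a (a + τ) := ⟨by linarith, le_rfl⟩
  set D : ℝ → V2 := fun t => V t - V a - 𝔟 • (pperp (X t) - pperp (X a))
    - Real.smoothTransition ((t - a) / τ) • g (X a) with hD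
  have hDd : ∀ t ∈ Set.Icc a (a + τ), HasDerivAt D (pulse a τ t • (g (X t) - g (X a))) t := by
    intro t ht
    refine ((((hV t ht).sub_const (V a)).fun_sub
      (((hX t ht).pperp.sub_const (pperp (X a))).fun_const_smul 𝔟)).fun_sub
      ((hasDerivAt_smoothTransition_comp a τ t).smul_const (g (X a)))).congr_deriv ?_
    rw [smul_sub]
    abel
  have hbd := image_norm_le_of_norm_deriv_right_le_deriv_boundary' (f := D) (a := a) (b := a + τ)
    (B := fun s => L * (S * τ) * Real.smoothTransition ((s - a) / τ))
    (B' := fun s => L * (S * τ) * pulse a τ s)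
    (fun s hs => (hDd s hs).continuousAt.continuousWithinAt)
    (fun s hs => (hDd s (Set.Ico_subset_Icc_self hs)).hasDerivWithinAt)
    (by simp [hD, Real.smoothTransition.zero])
    (fun s hs => ((hasDerivAt_smoothTransition_comp a τ s).const_mul
      (L * (S * τ))).continuousAt.continuousWithinAt)
    (fun s hs => ((hasDerivAt_smoothTransition_comp a τ s).const_mul
      (L * (S * τ))).hasDerivWithinAt)
    (fun s hs => ?_) hend
  · have h1 : Real.smoothTransition ((a + τ - a) / τ) = 1 := by
      rw [add_sub_cancel_left, div_self hτ.ne', Real.smoothTransition.one]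
    simp only [hD, h1, one_smul, mul_one] at hbd
    have h2 : V (a + τ) - V a - g (X a) =
        (V (a + τ) - V a - 𝔟 • (pperp (X (a + τ)) - pperp (X a)) - g (X a))
          + 𝔟 • (pperp (X (a + τ)) - pperp (X a)) := by abel
    have h3 : pperp (X (a + τ)) - pperp (X a) = pperp (X (a + τ) - X a) := by
      ext <;> simp [pperp]; ring
    rw [h2]
    refine (norm_add_le _ _).trans ?_
    rw [add_mul]
    refine add_le_add hbd ?_
    rw [h3, norm_smul, norm_pperp, Real.norm_eq_abs]
    gcongr
    exact hXd _ hend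
  · rw [norm_smul, Real.norm_of_nonneg (pulse_nonneg a s hτ), mul_comm]
    refine mul_le_mul_of_nonneg_right ?_ (pulse_nonneg a s hτ)
    refine (hL _ _).trans ?_
    gcongr
    exact hXd s (Set.Ico_subset_Icc_self hs)

end Kick

/-- Two short kicks by fields without common zero, separated by two cyclotron periods, make every
particle of bounded velocity visit a prescribed ball of the torus with large velocity. -/
lemma exists_kicks {𝔟 r R C L : ℝ} (h𝔟 : 𝔟 ≠ 0) (hr : 0 < r) {g₁ g₂ : V2 → V2}
    (hL0 : 0 ≤ L) (hC₁ : ∀ x, ‖g₁ x‖ ≤ C) (hC₂ : ∀ x, ‖g₂ x‖ ≤ C)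
    (hL₁ : ∀ x y, ‖g₁ x - g₁ y‖ ≤ L * ‖x - y‖) (hL₂ : ∀ x y, ‖g₂ x - g₂ y‖ ≤ L * ‖x - y‖)
    (hnd : ∀ x, 1 ≤ ‖g₁ x‖ ∨ 1 ≤ ‖g₂ x‖) :
    ∃ A τ c₀ : ℝ, 0 < τ ∧ τ ≤ 2 * π / |𝔟| ∧ 0 < c₀ ∧ ∀ c ≥ c₀, ∀ x₀ : V2, ∀ E : ℝ → V2 → V2,
      (∀ t y, E t y = pulse (2 * π / |𝔟|) τ t • A • g₁ y
        + pulse (2 * π / |𝔟| + τ + 2 * (2 * π / |𝔟|)) τ t • A • g₂ y) →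
      ∀ x v : V2, en v < R → ∀ X V : ℝ → V2,
        IsRelChar c (fun t y w => E t y + 𝔟 • pperp (vhat c w)) 0 x v X V →
        ∃ t ∈ Set.Icc (2 * π / |𝔟|) (8 * (2 * π / |𝔟|)), X t ∈ ballT2 x₀ r ∧ 5 ≤ en (V t) := by
  have hb0 : 0 < |𝔟| := abs_pos.2 h𝔟
  have hpi := Real.pi_pos
  obtain ⟨ρ₀, -, hρ₀⟩ := exists_circle_mem_ballT2 hr
  have hC0 : 0 ≤ C := (norm_nonneg _).trans (hC₁ 0)
  set P : ℝ := 2 * π / |𝔟| with hP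
  have hP0 : 0 < P := by positivity
  set M : ℝ := max (max (|𝔟| * ρ₀) R) 5 with hM
  have hM1 : |𝔟| * ρ₀ ≤ M := (le_max_left _ _).trans (le_max_left _ _)
  have hM2 : R ≤ M := (le_max_right _ _).trans (le_max_left _ _)
  have hM3 : 5 ≤ M := le_max_right _ _
  clear_value M
  set A : ℝ := 4 * M + 4 with hA
  have hA0 : 0 < A := by linarith
  set S : ℝ := M + 1 + 2 * (A * C) with hS
  have hS0 : 0 < S := by positivity
  set Q : ℝ := (A * L + |𝔟| + 4 * L + 1) * S with hQ
  have hQ0 : 0 < Q := by positivity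
  set τ : ℝ := min P (1 / Q) with hτ
  have hτ0 : 0 < τ := by positivity
  have hτP : τ ≤ P := min_le_left _ _
  have hτQ : Q * τ ≤ 1 := by
    have : τ ≤ 1 / Q := min_le_right _ _
    rwa [le_div_iff₀ hQ0, mul_comm] at this
  have hτ1 : (A * L + |𝔟|) * (S * τ) ≤ 1 := by
    refine le_trans ?_ hτQ
    rw [hQ, mul_assoc]
    exact mul_le_mul_of_nonneg_right (by linarith) (by positivity)
  have hτ2 : 4 * (L * (S * τ)) ≤ 1 := by
    refine le_trans ?_ hτQ
    rw [hQ, mul_assoc, ← mul_assoc]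
    have : 0 ≤ A * L := by positivity
    exact mul_le_mul_of_nonneg_right (by linarith) (by positivity)
  clear_value τ
  refine ⟨A, τ, S + 32 * π * L * M ^ 3 / |𝔟| + 1, hτ0, hτP, by positivity, ?_⟩
  intro c hc x₀ E hE x v hv X V hXV
  obtain ⟨-, hV0, hode⟩ := hXV
  have hterm : 0 ≤ 32 * π * L * M ^ 3 / |𝔟| := by positivity
  have hcS : S ≤ c := by linarith
  have hc1 : 1 ≤ c := by linarith
  have hc0 : 0 < c := by linarith
  have hret : L * (8 * π * M ^ 3 / (|𝔟| * c ^ 2)) ≤ 1 / 4 := by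
    have h1 : 32 * π * L * M ^ 3 / |𝔟| ≤ c ^ 2 := by nlinarith
    rw [div_le_iff₀ hb0] at h1
    rw [← mul_div_assoc, div_le_iff₀ (by positivity)]
    linarith
  have hlor : ∀ w : V2, en w ≤ S → lorentz c w ≤ 2 := by
    intro w hw
    have h1 := lorentz_sub_one_le hc0 hw
    have h2 : S ^ 2 / c ^ 2 ≤ 1 := by
      rw [div_le_one (by positivity)]
      gcongr
    linarith
  have hXd : ∀ t, HasDerivAt X (vhat c (V t)) t := fun t => (hode t).1
  have hVd : ∀ t, HasDerivAt V (E t (X t) + 𝔟 • pperp (vhat c (V t))) t := fun t => (hode t).2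
  set a := P + τ + 2 * P with ha
  have hfree : ∀ t, (t ≤ P ∨ P + τ ≤ t) → (t ≤ a ∨ a + τ ≤ t) →
      HasDerivAt V (𝔟 • pperp (vhat c (V t))) t := by
    intro t h1 h2
    refine (hVd t).congr_deriv ?_
    rw [hE, pulse_eq_zero hτ0 h1, pulse_eq_zero hτ0 h2, zero_smul, zero_smul, add_zero, zero_add]
  have hvisit : ∀ s, P + τ ≤ s → s + 2 * P ≤ 8 * P →
      (∀ t ∈ Set.Icc s (s + 2 * P), t ≤ a ∨ a + τ ≤ t) → M ≤ en (V s) → en (V s) ≤ S →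
      ∃ t ∈ Set.Icc P (8 * P), X t ∈ ballT2 x₀ r ∧ 5 ≤ en (V t) := by
    intro s hs1 hs2 hs3 hsM hsS
    have hVf : ∀ t ∈ Set.Icc s (s + 2 * P), HasDerivAt V (𝔟 • pperp (vhat c (V t))) t :=
      fun t ht => hfree t (Or.inr (by linarith [ht.1])) (hs3 t ht)
    obtain ⟨t, ht, hmem⟩ := exists_mem_ballT2_of_free (x₀ := x₀) h𝔟 hρ₀ le_rfl
      (fun t _ => hXd t) hVf (by linarith) (by linarith) (hlor _ hsS)
    refine ⟨t, ⟨by linarith [ht.1], by linarith [ht.2]⟩, hmem, ?_⟩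
    rw [en_eq_of_free hVf t ht]
    linarith
  have hkick : ∀ s (g : V2 → V2), (∀ x, ‖g x‖ ≤ C) → (∀ x y, ‖g x - g y‖ ≤ L * ‖x - y‖) →
      (∀ t ∈ Set.Icc s (s + τ), E t (X t) = pulse s τ t • A • g (X t)) → en (V s) ≤ M →
      en (V (s + τ)) ≤ S ∧ ‖X (s + τ) - X s‖ ≤ S * τ ∧
        A * ‖g (X s)‖ - M - 1 ≤ en (V (s + τ)) := by
    intro s g hgC hgL hg hsM
    have hend : s + τ ∈ Set.Icc s (s + τ) := ⟨by linarith, le_rfl⟩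
    have hVk : ∀ t ∈ Set.Icc s (s + τ),
        HasDerivAt V (pulse s τ t • (fun y => A • g y) (X t) + 𝔟 • pperp (vhat c (V t))) t :=
      fun t ht => (hVd t).congr_deriv (by rw [hg t ht])
    have hen := en_le_of_kick (g := fun y => A • g y) hτ0 (C := A * C) (fun y => by
      rw [norm_smul, Real.norm_of_nonneg hA0.le]
      exact mul_le_mul_of_nonneg_left (hgC y) hA0.le) hVk
    have hen' : ∀ t ∈ Set.Icc s (s + τ), en (V t) ≤ S := fun t ht =>
      (hen t ht).trans (by linarith)
    have hn := norm_velocity_sub_le_of_kick (g := fun y => A • g y) hτ0 (L := A * L)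
      (by positivity) (fun y z => by
      rw [← smul_sub, norm_smul, Real.norm_of_nonneg hA0.le, mul_assoc]
      exact mul_le_mul_of_nonneg_left (hgL y z) hA0.le) (fun t _ => hXd t) hVk hen'
    refine ⟨hen' _ hend, norm_sub_le_of_kick (fun t _ => hXd t) hen' _ hend, ?_⟩
    have h1 : ‖A • g (X s)‖ = A * ‖g (X s)‖ := by
      rw [norm_smul, Real.norm_of_nonneg hA0.le]
    have h2 : ‖A • g (X s)‖ ≤ ‖V (s + τ)‖ + ‖V s‖ + ‖V (s + τ) - V s - A • g (X s)‖ := by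
      have e : A • g (X s) = V (s + τ) - V s - (V (s + τ) - V s - A • g (X s)) := by abel
      calc ‖A • g (X s)‖ = ‖V (s + τ) - V s - (V (s + τ) - V s - A • g (X s))‖ := by rw [← e]
        _ ≤ ‖V (s + τ) - V s‖ + ‖V (s + τ) - V s - A • g (X s)‖ := norm_sub_le _ _
        _ ≤ _ := by gcongr; exact norm_sub_le _ _
    linarith [norm_le_en (V (s + τ)), norm_le_en (V s)]
  have hVP : en (V P) ≤ M := by
    rw [en_eq_of_free (a := 0) (b := P) (fun t ht => hfree t (Or.inl ht.2)
      (Or.inl (by linarith [ht.2]))) P ⟨hP0.le, le_rfl⟩, hV0]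
    linarith
  obtain ⟨hk1, hk2, hk3⟩ := hkick P g₁ hC₁ hL₁ (fun t ht => by
    rw [hE, pulse_eq_zero hτ0 (Or.inl (show t ≤ a by linarith [ht.2])), zero_smul, add_zero]) hVP
  rcases le_or_gt M (en (V (P + τ))) with hfast | hslow
  · exact hvisit (P + τ) le_rfl (by linarith) (fun t ht => Or.inl ht.2) hfast hk1
  · have hg1 : ‖g₁ (X P)‖ < 1 := by
      by_contra hcon
      push Not at hcon
      have := mul_le_mul_of_nonneg_left hcon hA0.le
      linarith
    have hg2 : 1 ≤ ‖g₂ (X P)‖ := (hnd (X P)).resolve_left (not_le.2 hg1)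
    have hVf : ∀ t ∈ Set.Icc (P + τ) a, HasDerivAt V (𝔟 • pperp (vhat c (V t))) t :=
      fun t ht => hfree t (Or.inr ht.1) (Or.inl ht.2)
    have hback := norm_sub_le_of_free h𝔟 hc0 ha (fun t _ => hXd t) hVf hslow.le
    have hVa : en (V a) ≤ M := by
      rw [en_eq_of_free hVf a ⟨by linarith, le_rfl⟩]
      exact hslow.le
    have hg2' : 1 / 2 ≤ ‖g₂ (X a)‖ := by
      have h1 := hL₂ (X P) (X a)
      have h2 : ‖X P - X a‖ ≤ S * τ + 8 * π * M ^ 3 / (|𝔟| * c ^ 2) := by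
        rw [norm_sub_rev]
        calc ‖X a - X P‖ = ‖(X (P + τ) - X P) + (X a - X (P + τ))‖ := by congr 1; abel
          _ ≤ _ := (norm_add_le _ _).trans (add_le_add hk2 hback)
      have h3 : L * ‖X P - X a‖ ≤ L * (S * τ + 8 * π * M ^ 3 / (|𝔟| * c ^ 2)) := by gcongr
      have h4 := norm_sub_norm_le (g₂ (X P)) (g₂ (X a))
      linarith
    obtain ⟨hq1, -, hq3⟩ := hkick a g₂ hC₂ hL₂ (fun t ht => by
      rw [hE, pulse_eq_zero hτ0 (Or.inr (show P + τ ≤ t by linarith [ht.1])), zero_smul,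
        zero_add]) hVa
    refine hvisit (a + τ) (by linarith) (by linarith) (fun t ht => Or.inr ht.1) ?_ hq1
    have := mul_le_mul_of_nonneg_left hg2' hA0.le
    linarith

/-- The product of a profile `p` along the direction `d` and a profile `q` across it. -/
def wave (d : V2) (p q : ℝ → ℝ) (x : V2) : ℝ :=
  p (d.1 * x.1 + d.2 * x.2) * q (d.1 * x.2 - d.2 * x.1)

lemma contDiff_wave (d : V2) {p q : ℝ → ℝ} {n : WithTop ℕ∞} (hp : ContDiff ℝ n p)
    (hq : ContDiff ℝ n q) : ContDiff ℝ n (wave d p q) := by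
  refine (hp.comp ?_).mul (hq.comp ?_) <;> fun_prop

lemma fderiv_wave (d : V2) {p q : ℝ → ℝ} (hp : Differentiable ℝ p) (hq : Differentiable ℝ q)
    (x u : V2) : fderiv ℝ (wave d p q) x u =
      (d.1 * u.1 + d.2 * u.2) * wave d (deriv p) q x +
        (d.1 * u.2 - d.2 * u.1) * wave d p (deriv q) x := by
  have hθ : HasFDerivAt (fun x : V2 => d.1 * x.1 + d.2 * x.2)
      (d.1 • ContinuousLinearMap.fst ℝ ℝ ℝ + d.2 • ContinuousLinearMap.snd ℝ ℝ ℝ) x :=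
    (hasFDerivAt_fst.const_mul d.1).add (hasFDerivAt_snd.const_mul d.2)
  have hs : HasFDerivAt (fun x : V2 => d.1 * x.2 - d.2 * x.1)
      (d.1 • ContinuousLinearMap.snd ℝ ℝ ℝ - d.2 • ContinuousLinearMap.fst ℝ ℝ ℝ) x :=
    (hasFDerivAt_snd.const_mul d.1).sub (hasFDerivAt_fst.const_mul d.2)
  have h := ((hp _).hasDerivAt.comp_hasFDerivAt x hθ).mul ((hq _).hasDerivAt.comp_hasFDerivAt x hs)
  have h' : fderiv ℝ (wave d p q) x = _ := h.fderiv
  rw [h']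
  simp [wave]
  ring

lemma zper_wave (d₁ d₂ : ℤ) {p q : ℝ → ℝ} (hp : Function.Periodic p 1)
    (hq : Function.Periodic q 1) : Zper (wave (d₁, d₂) p q) := by
  intro x m n
  have h1 := hp.int_mul (d₁ * m + d₂ * n) (d₁ * x.1 + d₂ * x.2)
  have h2 := hq.int_mul (d₁ * n - d₂ * m) (d₁ * x.2 - d₂ * x.1)
  push_cast at h1 h2
  simp only [wave]
  rw [← h1, ← h2]
  ring_nf

/-- The `1`-periodic oscillation of amplitude `a` and phase `α`. -/
def osc (a α θ : ℝ) : ℝ := a * cos (2 * π * θ + α)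

lemma contDiff_osc (a α : ℝ) {n : WithTop ℕ∞} : ContDiff ℝ n (osc a α) :=
  contDiff_const.mul (Real.contDiff_cos.comp (by fun_prop))

lemma deriv_osc (a α : ℝ) : deriv (osc a α) = osc (2 * π * a) (α + π / 2) := by
  funext θ
  have h : HasDerivAt (fun θ : ℝ => 2 * π * θ + α) (2 * π) θ := by
    simpa using ((hasDerivAt_id θ).const_mul (2 * π)).add_const α
  have h' : deriv (osc a α) θ = _ := (h.cos.const_mul a).deriv
  rw [h', osc, ← add_assoc, Real.cos_add_pi_div_two]
  ring

lemma osc_add_pi (a α θ : ℝ) : osc a (α + π / 2 + π / 2) θ = -osc a α θ := by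
  rw [osc, osc, show 2 * π * θ + (α + π / 2 + π / 2) = 2 * π * θ + α + π by ring, Real.cos_add_pi]
  ring

lemma periodic_osc (a α : ℝ) : Function.Periodic (osc a α) 1 := by
  intro θ
  rw [osc, osc, show 2 * π * (θ + 1) + α = 2 * π * θ + α + 2 * π by ring, Real.cos_add_two_pi]

lemma periodic_deriv {f : ℝ → ℝ} {T : ℝ} (hf : Function.Periodic f T) :
    Function.Periodic (deriv f) T := by
  intro s
  rw [← deriv_comp_add_const, funext hf]

lemma wave_osc_mul (d : V2) (a α : ℝ) (q : ℝ → ℝ) (x : V2) :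
    wave d (osc a α) q x = a * wave d (osc 1 α) q x := by
  simp only [wave, osc]; ring

/-- The gradient of a function on the plane, in coordinates. -/
def grad (W : V2 → ℝ) (x : V2) : V2 := (fderiv ℝ W x (1, 0), fderiv ℝ W x (0, 1))

lemma contDiff_grad {W : V2 → ℝ} (hW : ContDiff ℝ (⊤ : ℕ∞) W) : ContDiff ℝ (⊤ : ℕ∞) (grad W) := by
  have h : ContDiff ℝ (⊤ : ℕ∞) (fderiv ℝ W) := hW.fderiv_right (by simp)
  exact (h.clm_apply contDiff_const).prodMk (h.clm_apply contDiff_const)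

lemma Zper.fderiv {E : Type*} [NormedAddCommGroup E] [NormedSpace ℝ E] {W : V2 → E}
    (hW : Zper W) : Zper (fderiv ℝ W) := by
  intro x m n
  have h : W = fun y => W (y + ((m : ℝ), (n : ℝ))) := by
    funext y; exact (hW y m n).symm
  conv_rhs => rw [h, fderiv_comp_add_right]
  rfl

lemma Zper.grad {W : V2 → ℝ} (hW : Zper W) : Zper (grad W) := by
  intro x m n
  have h := hW.fderiv x m n
  rw [_root_.grad, h, _root_.grad]

/-- Continuous maps on the torus are bounded. -/
lemma Zper.exists_bound {E : Type*} [NormedAddCommGroup E] {g : V2 → E} (hg : Zper g)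
    (hc : Continuous g) : ∃ C, 0 ≤ C ∧ ∀ x, ‖g x‖ ≤ C := by
  obtain ⟨C, hC⟩ := (isCompact_Icc (a := ((0 : ℝ), (0 : ℝ)))
    (b := (1, 1))).exists_bound_of_continuousOn hc.continuousOn
  refine ⟨C, (norm_nonneg _).trans (hC (0, 0) (by simp)), fun x => ?_⟩
  have h := hg (Int.fract x.1, Int.fract x.2) ⌊x.1⌋ ⌊x.2⌋
  rw [Int.fract_add_floor, Int.fract_add_floor] at h
  rw [h]
  refine hC _ ⟨⟨Int.fract_nonneg _, Int.fract_nonneg _⟩,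
    ⟨(Int.fract_lt_one _).le, (Int.fract_lt_one _).le⟩⟩

/-- `C¹` maps on the torus are Lipschitz. -/
lemma Zper.exists_lipschitz {E : Type*} [NormedAddCommGroup E] [NormedSpace ℝ E] {g : V2 → E}
    (hg : Zper g) (hc : ContDiff ℝ 1 g) :
    ∃ L, 0 ≤ L ∧ ∀ x y, ‖g x - g y‖ ≤ L * ‖x - y‖ := by
  obtain ⟨L, hL0, hL⟩ := hg.fderiv.exists_bound (hc.continuous_fderiv one_ne_zero)
  refine ⟨L, hL0, fun x y => ?_⟩
  exact convex_univ.norm_image_sub_le_of_norm_fderiv_le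
    (fun z _ => (hc.differentiable one_ne_zero) z) (fun z _ => hL z) (Set.mem_univ _)
    (Set.mem_univ _)

lemma grad_wave_nondegenerate {d : V2} (hd : 1 ≤ d.1 ^ 2 + d.2 ^ 2) {e : ℝ → ℝ}
    (he : Differentiable ℝ e) (he1 : ∀ s, 1 ≤ e s) (x : V2) :
    1 ≤ ‖grad (wave d (osc 1 0) e) x‖ ∨ 1 ≤ ‖grad (wave d (osc 1 (π / 2)) e) x‖ := by
  by_contra! h
  obtain ⟨h1, h2⟩ := h
  have hd' := fun a α => ((contDiff_osc a α (n := 1)).differentiable one_ne_zero)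
  rw [Prod.norm_def, max_lt_iff, Real.norm_eq_abs, Real.norm_eq_abs, ← sq_lt_one_iff_abs_lt_one,
    ← sq_lt_one_iff_abs_lt_one] at h1 h2
  simp only [grad, fderiv_wave d (hd' _ _) he, deriv_osc] at h1 h2
  simp only [wave, osc] at h1 h2
  set y := d.1 * x.1 + d.2 * x.2
  set s := d.1 * x.2 - d.2 * x.1
  have e1 := he1 s
  have hpi := Real.pi_gt_three
  have htrig := Real.sin_sq_add_cos_sq (2 * π * y)
  have hc : cos (2 * π * y + (π / 2 + π / 2)) = -cos (2 * π * y) := by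
    rw [add_halves, Real.cos_add_pi]
  simp only [zero_add, add_zero, hc, Real.cos_add_pi_div_two] at h1 h2
  set S := sin (2 * π * y)
  set K := cos (2 * π * y)
  have key : (d.1 ^ 2 + d.2 ^ 2) * (4 * π ^ 2 * e s ^ 2 + deriv e s ^ 2) < 4 := by
    have : (d.1 ^ 2 + d.2 ^ 2) * (4 * π ^ 2 * e s ^ 2 + deriv e s ^ 2) * (S ^ 2 + K ^ 2) < 4 := by
      nlinarith [h1.1, h1.2, h2.1, h2.2]
    rwa [htrig, mul_one] at this
  have h3 : 1 ≤ e s ^ 2 := one_le_pow₀ e1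
  have h4 : 9 ≤ π ^ 2 := by nlinarith
  have h5 : 9 ≤ π ^ 2 * e s ^ 2 := by nlinarith
  nlinarith [sq_nonneg (deriv e s)]

lemma lap_wave_osc {d : V2} (a α : ℝ) {e : ℝ → ℝ} (he : ContDiff ℝ (⊤ : ℕ∞) e) (x : V2) :
    fderiv ℝ (fun y => (grad (wave d (osc a α) e) y).1) x (1, 0) +
      fderiv ℝ (fun y => (grad (wave d (osc a α) e) y).2) x (0, 1) =
    wave d (osc (a * (d.1 ^ 2 + d.2 ^ 2)) α)
      (fun s => deriv (deriv e) s - 4 * π ^ 2 * e s) x := by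
  have hd' := fun a α => ((contDiff_osc a α (n := 1)).differentiable one_ne_zero)
  have he0 : Differentiable ℝ e := he.differentiable (by simp)
  have he1' := contDiff_deriv_of_contDiff he
  have he1 : Differentiable ℝ (deriv e) := he1'.differentiable (by simp)
  have hw : ∀ (p q : ℝ → ℝ), Differentiable ℝ p → Differentiable ℝ q →
      Differentiable ℝ (wave d p q) := by
    intro p q hp hq
    unfold wave
    fun_prop
  have h0 := hw _ _ (hd' (2 * π * a) (α + π / 2)) he0
  have h1 := hw _ _ (hd' a α) he1
  have e1 : (fun y => (grad (wave d (osc a α) e) y).1) = fun y =>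
      d.1 * wave d (osc (2 * π * a) (α + π / 2)) e y - d.2 * wave d (osc a α) (deriv e) y := by
    funext y
    simp [grad, fderiv_wave d (hd' _ _) he0, deriv_osc]
    ring
  have e2 : (fun y => (grad (wave d (osc a α) e) y).2) = fun y =>
      d.2 * wave d (osc (2 * π * a) (α + π / 2)) e y + d.1 * wave d (osc a α) (deriv e) y := by
    funext y
    simp [grad, fderiv_wave d (hd' _ _) he0, deriv_osc]
  rw [e1, e2, fderiv_fun_sub ((h0 x).const_mul _) ((h1 x).const_mul _),
    fderiv_fun_add ((h0 x).const_mul _) ((h1 x).const_mul _), fderiv_const_mul (h0 x),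
    fderiv_const_mul (h1 x), fderiv_const_mul (h0 x), fderiv_const_mul (h1 x)]
  simp only [sub_apply, add_apply,
    smul_apply, fderiv_wave d (hd' _ _) he0, fderiv_wave d (hd' _ _) he1,
    deriv_osc]
  simp only [wave, osc_add_pi]
  simp only [osc, smul_eq_mul]
  ring

lemma intT2_eq_intervalIntegral {g : V2 → ℝ} (hg : Continuous g) :
    intT2 g = ∫ a in (0 : ℝ)..1, ∫ b in (0 : ℝ)..1, g (a, b) := by
  have hint : IntegrableOn g (Set.Icc (0 : ℝ) 1 ×ˢ Set.Icc (0 : ℝ) 1) (volume.prod volume) :=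
    hg.continuousOn.integrableOn_compact (isCompact_Icc.prod isCompact_Icc)
  rw [intT2, unitSq, ← Set.Icc_prod_Icc, Measure.volume_eq_prod, setIntegral_prod _ hint,
    intervalIntegral.integral_of_le zero_le_one, integral_Icc_eq_integral_Ioc]
  refine integral_congr_ae (Filter.Eventually.of_forall fun a => ?_)
  simp only
  rw [intervalIntegral.integral_of_le zero_le_one, integral_Icc_eq_integral_Ioc]

/-- Translation invariance of the integral over the torus. -/
lemma intT2_comp_add {g : V2 → ℝ} (hg : Continuous g) (hper : Zper g) (u : V2) :
    intT2 (fun x => g (x + u)) = intT2 g := by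
  rw [intT2_eq_intervalIntegral hg, intT2_eq_intervalIntegral (by fun_prop)]
  have h1 : ∀ a, ∫ b in (0 : ℝ)..1, g ((a, b) + u) = ∫ b in (0 : ℝ)..1, g (a + u.1, b) := by
    intro a
    have hp : Function.Periodic (fun b => g (a + u.1, b)) 1 := by
      intro b
      simpa using hper (a + u.1, b) 0 1
    have := intervalIntegral.integral_comp_add_right (a := 0) (b := 1)
      (fun b => g (a + u.1, b)) u.2
    have h := hp.intervalIntegral_add_eq u.2 0
    rw [zero_add] at h
    rw [zero_add, add_comm 1] at this
    rw [← h]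
    exact this
  have hp : Function.Periodic (fun a => ∫ b in (0 : ℝ)..1, g (a, b)) 1 := by
    intro a
    refine intervalIntegral.integral_congr fun b _ => ?_
    simpa using hper (a, b) 1 0
  simp_rw [h1]
  have := intervalIntegral.integral_comp_add_right (a := 0) (b := 1)
    (fun a => ∫ b in (0 : ℝ)..1, g (a, b)) u.1
  have h := hp.intervalIntegral_add_eq u.1 0
  rw [zero_add] at h
  rw [this, ← h, zero_add, add_comm]

lemma intT2_wave_osc {d₁ d₂ : ℤ} (hd : 1 ≤ (d₁ : ℝ) ^ 2 + (d₂ : ℝ) ^ 2) (a α : ℝ) {q : ℝ → ℝ}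
    (hq : Continuous q) (hqp : Function.Periodic q 1) :
    intT2 (wave (d₁, d₂) (osc a α) q) = 0 := by
  have hc : Continuous (wave (d₁, d₂) (osc a α) q) := by
    unfold wave osc; fun_prop
  have hD : (d₁ : ℝ) ^ 2 + (d₂ : ℝ) ^ 2 ≠ 0 := by positivity
  have h := intT2_comp_add hc (zper_wave d₁ d₂ (periodic_osc a α) hqp)
    ((2 * ((d₁ : ℝ) ^ 2 + (d₂ : ℝ) ^ 2))⁻¹ • ((d₁ : ℝ), (d₂ : ℝ)))
  have h2 : (fun x => wave (d₁, d₂) (osc a α) q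
      (x + (2 * ((d₁ : ℝ) ^ 2 + (d₂ : ℝ) ^ 2))⁻¹ • ((d₁ : ℝ), (d₂ : ℝ)))) =
      fun x => -wave (d₁, d₂) (osc a α) q x := by
    funext x
    simp only [wave, Prod.fst_add, Prod.snd_add, Prod.smul_fst, Prod.smul_snd, smul_eq_mul]
    rw [show d₁ * (x.1 + (2 * ((d₁ : ℝ) ^ 2 + (d₂ : ℝ) ^ 2))⁻¹ * d₁) +
        d₂ * (x.2 + (2 * ((d₁ : ℝ) ^ 2 + (d₂ : ℝ) ^ 2))⁻¹ * d₂) = d₁ * x.1 + d₂ * x.2 + 1 / 2 by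
        field_simp; ring,
      show d₁ * (x.2 + (2 * ((d₁ : ℝ) ^ 2 + (d₂ : ℝ) ^ 2))⁻¹ * d₂) -
        d₂ * (x.1 + (2 * ((d₁ : ℝ) ^ 2 + (d₂ : ℝ) ^ 2))⁻¹ * d₁) = d₁ * x.2 - d₂ * x.1 by ring]
    rw [osc, osc, show 2 * π * (d₁ * x.1 + d₂ * x.2 + 1 / 2) + α =
      2 * π * (d₁ * x.1 + d₂ * x.2) + α + π by ring, Real.cos_add_pi]
    ring
  rw [h2, intT2, integral_neg] at h
  have h3 : -intT2 (wave (d₁, d₂) (osc a α) q) = intT2 (wave (d₁, d₂) (osc a α) q) := h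
  linarith

/-- A superposition of two spatial modes with time-dependent amplitudes. -/
def twoMode (η₁ η₂ : ℝ → ℝ) (W₁ W₂ : V2 → ℝ) (p : ℝ × V2) : ℝ :=
  η₁ p.1 * W₁ p.2 + η₂ p.1 * W₂ p.2

section TwoMode

variable {η₁ η₂ : ℝ → ℝ} {W₁ W₂ : V2 → ℝ}

lemma contDiff_twoMode {n : WithTop ℕ∞} (h₁ : ContDiff ℝ n η₁) (h₂ : ContDiff ℝ n η₂)
    (hW₁ : ContDiff ℝ n W₁) (hW₂ : ContDiff ℝ n W₂) : ContDiff ℝ n (twoMode η₁ η₂ W₁ W₂) :=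
  ((h₁.comp contDiff_fst).mul (hW₁.comp contDiff_snd)).add
    ((h₂.comp contDiff_fst).mul (hW₂.comp contDiff_snd))

lemma zper_twoMode (hW₁ : Zper W₁) (hW₂ : Zper W₂) (t : ℝ) :
    Zper fun x => twoMode η₁ η₂ W₁ W₂ (t, x) := by
  intro x m n
  have h1 := hW₁ x m n
  have h2 := hW₂ x m n
  simp only [twoMode, h1, h2]

lemma fderiv_twoMode_space (hW₁ : Differentiable ℝ W₁) (hW₂ : Differentiable ℝ W₂) (t : ℝ)
    (x u : V2) : fderiv ℝ (fun y => twoMode η₁ η₂ W₁ W₂ (t, y)) x u =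
      η₁ t * fderiv ℝ W₁ x u + η₂ t * fderiv ℝ W₂ x u := by
  simp only [twoMode]
  rw [fderiv_fun_add ((hW₁ x).const_mul _) ((hW₂ x).const_mul _), fderiv_const_mul (hW₁ x),
    fderiv_const_mul (hW₂ x)]
  rfl

lemma fderiv_twoMode_time (h₁ : Differentiable ℝ η₁) (h₂ : Differentiable ℝ η₂)
    (hW₁ : Differentiable ℝ W₁) (hW₂ : Differentiable ℝ W₂) (t : ℝ) (x : V2) :
    fderiv ℝ (twoMode η₁ η₂ W₁ W₂) (t, x) (1, 0, 0) =
      twoMode (deriv η₁) (deriv η₂) W₁ W₂ (t, x) := by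
  have hd : DifferentiableAt ℝ (twoMode η₁ η₂ W₁ W₂) (t, x) := by
    unfold twoMode; fun_prop
  have hline : HasDerivAt (fun s : ℝ => (s, x)) ((1 : ℝ), (0 : V2)) t :=
    (hasDerivAt_id t).prodMk (hasDerivAt_const t x)
  have h := hd.hasFDerivAt.comp_hasDerivAt t hline
  have h' := ((h₁ t).hasDerivAt.mul_const (W₁ x)).add ((h₂ t).hasDerivAt.mul_const (W₂ x))
  exact h.unique h'

lemma gradx_twoMode (hW₁ : Differentiable ℝ W₁) (hW₂ : Differentiable ℝ W₂) (t : ℝ) (x : V2) :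
    gradx (twoMode η₁ η₂ W₁ W₂) t x = η₁ t • grad W₁ x + η₂ t • grad W₂ x := by
  simp only [gradx, fderiv_twoMode_space hW₁ hW₂]
  rfl

lemma contDiff_gradx_twoMode (h₁ : ContDiff ℝ (⊤ : ℕ∞) η₁) (h₂ : ContDiff ℝ (⊤ : ℕ∞) η₂)
    (hW₁ : ContDiff ℝ (⊤ : ℕ∞) W₁) (hW₂ : ContDiff ℝ (⊤ : ℕ∞) W₂) :
    ContDiff ℝ (⊤ : ℕ∞) fun p : ℝ × V2 => gradx (twoMode η₁ η₂ W₁ W₂) p.1 p.2 := by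
  simp only [gradx_twoMode (hW₁.differentiable (by simp)) (hW₂.differentiable (by simp))]
  exact ((h₁.comp contDiff_fst).smul ((contDiff_grad hW₁).comp contDiff_snd)).add
    ((h₂.comp contDiff_fst).smul ((contDiff_grad hW₂).comp contDiff_snd))

lemma lapx_twoMode (hW₁ : ContDiff ℝ (⊤ : ℕ∞) W₁) (hW₂ : ContDiff ℝ (⊤ : ℕ∞) W₂) (t : ℝ) (x : V2) :
    lapx (twoMode η₁ η₂ W₁ W₂) t x =
      η₁ t * (fderiv ℝ (fun y => (grad W₁ y).1) x (1, 0) +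
        fderiv ℝ (fun y => (grad W₁ y).2) x (0, 1)) +
      η₂ t * (fderiv ℝ (fun y => (grad W₂ y).1) x (1, 0) +
        fderiv ℝ (fun y => (grad W₂ y).2) x (0, 1)) := by
  have hg₁ := (contDiff_grad hW₁).differentiable (by simp)
  have hg₂ := (contDiff_grad hW₂).differentiable (by simp)
  simp only [lapx, fderiv_twoMode_space (hW₁.differentiable (by simp))
    (hW₂.differentiable (by simp))]
  have h1 := fderiv_twoMode_space (η₁ := η₁) (η₂ := η₂) hg₁.fst hg₂.fst t x (1, 0)
  have h2 := fderiv_twoMode_space (η₁ := η₁) (η₂ := η₂) hg₁.snd hg₂.snd t x (0, 1)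
  simp only [twoMode, grad] at h1 h2 ⊢
  rw [h1, h2]
  ring

lemma intT2_twoMode (hW₁ : Continuous W₁) (hW₂ : Continuous W₂) (h₁ : intT2 W₁ = 0)
    (h₂ : intT2 W₂ = 0) (t : ℝ) : intT2 (fun x => twoMode η₁ η₂ W₁ W₂ (t, x)) = 0 := by
  have hint : ∀ W : V2 → ℝ, Continuous W → IntegrableOn W unitSq := fun W hW =>
    hW.continuousOn.integrableOn_compact isCompact_Icc
  simp only [intT2, twoMode] at *
  rw [integral_add ((hint W₁ hW₁).const_mul _) ((hint W₂ hW₂).const_mul _), integral_const_mul,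
    integral_const_mul, h₁, h₂]
  simp

end TwoMode

lemma exists_even_bump : ∃ a : ℝ → ℝ, ContDiff ℝ (⊤ : ℕ∞) a ∧ (∀ s, 1 ≤ |s| → a s = 0) ∧
    (∀ s, a (-s) = a s) ∧ ∫ s, a s = 1 ∧ 0 < ∫ s, s ^ 2 * a s := by
  let b : ContDiffBump (0 : ℝ) := ⟨1 / 2, 1, by norm_num, by norm_num⟩
  have hzero : ∀ s, 1 ≤ |s| → b.normed volume s = 0 := by
    intro s hs
    have : s ∉ Function.support (b.normed volume) := by
      rw [b.support_normed_eq]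
      simpa [b] using hs
    simpa using this
  have hc : Continuous (b.normed volume) := (b.contDiff_normed (n := 0)).continuous
  refine ⟨b.normed volume, b.contDiff_normed, hzero, fun s => b.normed_neg s, b.integral_normed, ?_⟩
  refine Continuous.integral_pos_of_hasCompactSupport_nonneg_nonzero (x := 1 / 2) (by fun_prop)
    (b.hasCompactSupport_normed.mul_left) (fun s => mul_nonneg (sq_nonneg s) (b.nonneg_normed s)) ?_
  have : (1 / 2 : ℝ) ∈ Function.support (b.normed volume) := by
    rw [b.support_normed_eq]
    simp [b]
    norm_num
  have : b.normed volume (1 / 2) ≠ 0 := this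
  positivity

lemma integral_eq_zero_of_odd {f : V2 → ℝ} (hf : ∀ v, f (-v) = -f v) : ∫ v, f v = 0 := by
  have h := integral_neg_eq_self f volume
  simp only [hf, integral_neg] at h
  linarith

lemma lorentz_neg (c : ℝ) (v : V2) : lorentz c (-v) = lorentz c v := by
  simp [lorentz]

lemma contDiff_lorentz (c : ℝ) {n : WithTop ℕ∞} : ContDiff ℝ n (lorentz c) := by
  unfold lorentz
  refine ContDiff.sqrt (by fun_prop) fun v => ?_
  positivity

lemma contDiff_vhat (c : ℝ) {n : WithTop ℕ∞} : ContDiff ℝ n (vhat c) := by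
  rw [funext (vhat_eq c)]
  exact ((contDiff_lorentz c).inv fun v => (lorentz_pos c v).ne').smul contDiff_id

/-- The velocity distribution built on the profile `a`, with charge `r` and current `J`. -/
def velDist (a : ℝ → ℝ) (c r : ℝ) (J v : V2) : ℝ :=
  a v.1 * a v.2 * (r + lorentz c v * (J.1 * v.1 + J.2 * v.2) / ∫ s, s ^ 2 * a s)

section VelDist

variable {a : ℝ → ℝ} (c r : ℝ) (J : V2)

lemma velDist_eq_zero (ha : ∀ s, 1 ≤ |s| → a s = 0) {v : V2} (hv : 2 ≤ en v) :
    velDist a c r J v = 0 := by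
  have h : 1 ≤ |v.1| ∨ 1 ≤ |v.2| := by
    by_contra! h
    have h1 := (sq_lt_one_iff_abs_lt_one _).2 h.1
    have h2 := (sq_lt_one_iff_abs_lt_one _).2 h.2
    have h3 := en_sq v
    nlinarith
  rcases h with h | h <;> simp [velDist, ha _ h]

lemma hasCompactSupport_mul_mul (ha : ∀ s, 1 ≤ |s| → a s = 0) (g : V2 → ℝ) :
    HasCompactSupport fun v : V2 => a v.1 * a v.2 * g v := by
  refine HasCompactSupport.of_support_subset_isCompact (isCompact_closedBall (0 : V2) 1) ?_
  intro v hv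
  by_contra h
  rw [mem_closedBall_zero_iff, Prod.norm_def, max_le_iff, not_and_or, not_le, not_le] at h
  rcases h with h | h <;> exact hv (by simp [ha _ h.le])

lemma integral_velDist (hc : Continuous a) (ha : ∀ s, 1 ≤ |s| → a s = 0)
    (heven : ∀ s, a (-s) = a s) (hone : ∫ s, a s = 1) : ∫ v, velDist a c r J v = r := by
  have hl : Continuous (lorentz c) := (contDiff_lorentz c (n := 0)).continuous
  have hint : ∀ g : V2 → ℝ, Continuous g → Integrable fun v : V2 => a v.1 * a v.2 * g v :=
    fun g hg => Continuous.integrable_of_hasCompactSupport (by fun_prop)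
      (hasCompactSupport_mul_mul ha g)
  have hodd : ∫ v : V2, a v.1 * a v.2 *
      (lorentz c v * (J.1 * v.1 + J.2 * v.2) / ∫ s, s ^ 2 * a s) = 0 := by
    refine integral_eq_zero_of_odd fun v => ?_
    simp only [Prod.fst_neg, Prod.snd_neg, heven, lorentz_neg]
    ring
  simp only [velDist, mul_add (a _ * a _)]
  rw [integral_add (hint _ continuous_const) (hint _ (by fun_prop)), hodd, integral_mul_const,
    Measure.volume_eq_prod, integral_prod_mul, hone]
  ring

lemma integral_velDist_mul_vhat (hc : Continuous a) (ha : ∀ s, 1 ≤ |s| → a s = 0)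
    (heven : ∀ s, a (-s) = a s) (hone : ∫ s, a s = 1) (hK : 0 < ∫ s, s ^ 2 * a s) :
    ∫ v, velDist a c r J v * (vhat c v).1 = J.1 ∧
      ∫ v, velDist a c r J v * (vhat c v).2 = J.2 := by
  have hl : Continuous (lorentz c) := (contDiff_lorentz c (n := 0)).continuous
  have hl0 : ∀ v, lorentz c v ≠ 0 := fun v => (lorentz_pos c v).ne'
  have hint : ∀ g : V2 → ℝ, Continuous g → Integrable fun v : V2 => a v.1 * a v.2 * g v :=
    fun g hg => Continuous.integrable_of_hasCompactSupport (by fun_prop)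
      (hasCompactSupport_mul_mul ha g)
  have h12 : ∫ v : V2, a v.1 * a v.2 * (v.1 * v.2) = 0 := by
    have h0 : ∫ s : ℝ, s * a s = 0 := by
      have h := integral_neg_eq_self (fun s : ℝ => s * a s) volume
      simp only [heven, neg_mul, integral_neg] at h
      linarith
    have h := integral_prod_mul (μ := volume) (ν := volume) (fun s : ℝ => s * a s) fun s => s * a s
    rw [h0, zero_mul, ← Measure.volume_eq_prod] at h
    rw [← h]
    congr 1 with v
    ring
  have h11 : ∫ v : V2, a v.1 * a v.2 * v.1 ^ 2 = ∫ s, s ^ 2 * a s := by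
    have h := integral_prod_mul (μ := volume) (ν := volume) (fun s : ℝ => s ^ 2 * a s) a
    rw [hone, mul_one, ← Measure.volume_eq_prod] at h
    rw [← h]
    congr 1 with v
    ring
  have h22 : ∫ v : V2, a v.1 * a v.2 * v.2 ^ 2 = ∫ s, s ^ 2 * a s := by
    have h := integral_prod_mul (μ := volume) (ν := volume) a (fun s : ℝ => s ^ 2 * a s)
    rw [hone, one_mul, ← Measure.volume_eq_prod] at h
    rw [← h]
    congr 1 with v
    ring
  have key : ∀ g P Q : V2 → ℝ, Continuous g → Continuous P → Continuous Q →
      (∀ v, g (-v) = -g v) → ∀ α β : ℝ, ∫ v : V2, (a v.1 * a v.2 * g v +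
        (α * (a v.1 * a v.2 * P v) + β * (a v.1 * a v.2 * Q v))) =
      α * (∫ v : V2, a v.1 * a v.2 * P v) + β * ∫ v : V2, a v.1 * a v.2 * Q v := by
    intro g P Q hg hP hQ hodd α β
    have hz : ∫ v : V2, a v.1 * a v.2 * g v = 0 := by
      refine integral_eq_zero_of_odd fun v => ?_
      simp only [Prod.fst_neg, Prod.snd_neg, heven, hodd]
      ring
    have hP' := (hint P hP).const_mul α
    have hQ' := (hint Q hQ).const_mul β
    have h : ∫ v : V2, (a v.1 * a v.2 * g v +
        (α * (a v.1 * a v.2 * P v) + β * (a v.1 * a v.2 * Q v))) = _ :=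
      integral_add (hint g hg) (hP'.add hQ')
    have h' : ∫ v : V2, (α * (a v.1 * a v.2 * P v) + β * (a v.1 * a v.2 * Q v)) = _ :=
      integral_add hP' hQ'
    rw [h, hz, zero_add]
    refine h'.trans ?_
    rw [integral_const_mul, integral_const_mul]
  set K := ∫ s, s ^ 2 * a s
  constructor
  · have e : ∀ v, velDist a c r J v * (vhat c v).1 = a v.1 * a v.2 * (r * (lorentz c v)⁻¹ * v.1) +
        (J.1 / K * (a v.1 * a v.2 * v.1 ^ 2) + J.2 / K * (a v.1 * a v.2 * (v.1 * v.2))) := by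
      intro v
      have := hl0 v
      simp only [velDist, vhat_eq, Prod.smul_fst, smul_eq_mul]
      change a v.1 * a v.2 * (r + lorentz c v * (J.1 * v.1 + J.2 * v.2) / K) * _ = _
      field_simp
    simp only [e]
    rw [key (fun v => r * (lorentz c v)⁻¹ * v.1) (fun v => v.1 ^ 2) (fun v => v.1 * v.2)
      (by fun_prop (disch := exact hl0)) (by fun_prop) (by fun_prop) (fun v => ?_), h11, h12]
    · field_simp
      ring
    · simp only [Prod.fst_neg, lorentz_neg]
      ring
  · have e : ∀ v, velDist a c r J v * (vhat c v).2 = a v.1 * a v.2 * (r * (lorentz c v)⁻¹ * v.2) +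
        (J.1 / K * (a v.1 * a v.2 * (v.1 * v.2)) + J.2 / K * (a v.1 * a v.2 * v.2 ^ 2)) := by
      intro v
      have := hl0 v
      simp only [velDist, vhat_eq, Prod.smul_snd, smul_eq_mul]
      change a v.1 * a v.2 * (r + lorentz c v * (J.1 * v.1 + J.2 * v.2) / K) * _ = _
      field_simp
    simp only [e]
    rw [key (fun v => r * (lorentz c v)⁻¹ * v.2) (fun v => v.1 * v.2) (fun v => v.2 ^ 2)
      (by fun_prop (disch := exact hl0)) (by fun_prop) (by fun_prop) (fun v => ?_), h12, h22]
    · field_simp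
      ring
    · simp only [Prod.snd_neg, lorentz_neg]
      ring

end VelDist

lemma contDiff_velDist {a : ℝ → ℝ} (ha : ContDiff ℝ (⊤ : ℕ∞) a) (c : ℝ) {ρ : ℝ × V2 → ℝ}
    {j : ℝ × V2 → V2} (hρ : ContDiff ℝ (⊤ : ℕ∞) ρ) (hj : ContDiff ℝ (⊤ : ℕ∞) j) :
    ContDiff ℝ (⊤ : ℕ∞) fun p : ℝ × V2 × V2 =>
      velDist a c (ρ (p.1, p.2.1)) (j (p.1, p.2.1)) p.2.2 := by
  have hl := contDiff_lorentz c (n := ((⊤ : ℕ∞) : WithTop ℕ∞))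
  unfold velDist
  refine ContDiff.mul (by fun_prop) (ContDiff.add (by fun_prop) (ContDiff.div_const ?_ _))
  fun_prop

/-- The source term of the Vlasov equation satisfied by a given distribution function, for the
force field `E + 𝔟 v̂⊥`. -/
lemma exists_source {F : ℝ × V2 × V2 → ℝ} {E : ℝ → V2 → V2} (c 𝔟 : ℝ)
    (hF : ContDiff ℝ (⊤ : ℕ∞) F) (hE : ContDiff ℝ (⊤ : ℕ∞) fun p : ℝ × V2 => E p.1 p.2) :
    ∃ G : ℝ × V2 × V2 → ℝ, ContDiff ℝ (⊤ : ℕ∞) G ∧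
      (∀ p, F =ᶠ[nhds p] 0 → G p = 0) ∧ ∀ t x v,
        fderiv ℝ F (t, x, v) (1, vhat c v, (0, 0)) +
          fderiv ℝ (fun w : V2 => (E t x + 𝔟 • pperp (vhat c w)).1 * F (t, x, w)) v (1, 0) +
          fderiv ℝ (fun w : V2 => (E t x + 𝔟 • pperp (vhat c w)).2 * F (t, x, w)) v (0, 1) =
        G (t, x, v) := by
  have hv := contDiff_vhat c (n := ((⊤ : ℕ∞) : WithTop ℕ∞))
  set M : ℝ × V2 × V2 → V2 := fun p => E p.1 p.2.1 + 𝔟 • pperp (vhat c p.2.2) with hM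
  have hM' : ContDiff ℝ (⊤ : ℕ∞) M := by
    refine ContDiff.add (hE.comp (contDiff_fst.prodMk (contDiff_fst.comp contDiff_snd))) ?_
    have hv' : ContDiff ℝ (⊤ : ℕ∞) fun p : ℝ × V2 × V2 => vhat c p.2.2 :=
      hv.comp (contDiff_snd.comp contDiff_snd)
    exact (hv'.snd.prodMk hv'.fst.neg).const_smul 𝔟
  have h1 : ContDiff ℝ (⊤ : ℕ∞) fun p => (M p).1 * F p := (contDiff_fst.comp hM').mul hF
  have h2 : ContDiff ℝ (⊤ : ℕ∞) fun p => (M p).2 * F p := (contDiff_snd.comp hM').mul hF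
  have hd : ∀ {H : ℝ × V2 × V2 → ℝ}, ContDiff ℝ (⊤ : ℕ∞) H → ∀ t x v u,
      fderiv ℝ (fun w => H (t, x, w)) v u = fderiv ℝ H (t, x, v) (0, 0, u) := by
    intro H hH t x v u
    have ha : HasFDerivAt (fun w : V2 => (t, x, w)) ((0 : V2 →L[ℝ] ℝ).prod
        ((0 : V2 →L[ℝ] V2).prod (ContinuousLinearMap.id ℝ V2))) v :=
      (hasFDerivAt_const t v).prodMk ((hasFDerivAt_const x v).prodMk (hasFDerivAt_id v))
    have hb := ((hH.differentiable (by simp)) (t, x, v)).hasFDerivAt.comp v ha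
    have hb' : fderiv ℝ (fun w => H (t, x, w)) v = _ := hb.fderiv
    rw [hb']
    rfl
  refine ⟨fun p => fderiv ℝ F p (1, vhat c p.2.2, (0, 0)) +
    fderiv ℝ (fun p => (M p).1 * F p) p (0, 0, (1, 0)) +
    fderiv ℝ (fun p => (M p).2 * F p) p (0, 0, (0, 1)), ?_, ?_, ?_⟩
  · refine ((ContDiff.clm_apply (hF.fderiv_right (by simp)) ?_).add
      ((h1.fderiv_right (by simp)).clm_apply contDiff_const)).add
      ((h2.fderiv_right (by simp)).clm_apply contDiff_const)
    fun_prop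
  · intro p hp
    have e1 : (fun p => (M p).1 * F p) =ᶠ[nhds p] fun _ => 0 := by
      filter_upwards [hp] with q hq
      simp [hq]
    have e2 : (fun p => (M p).2 * F p) =ᶠ[nhds p] fun _ => 0 := by
      filter_upwards [hp] with q hq
      simp [hq]
    have e0 : F =ᶠ[nhds p] fun _ => 0 := hp
    simp only [e0.fderiv_eq, e1.fderiv_eq, e2.fderiv_eq]
    simp
  · intro t x v
    have e1 := hd h1 t x v (1, 0)
    have e2 := hd h2 t x v (0, 1)
    simp only [hM] at e1 e2 ⊢
    rw [e1, e2]

lemma charge_conservation {η₁ η₂ q : ℝ → ℝ} (h₁ : ContDiff ℝ (⊤ : ℕ∞) η₁)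
    (h₂ : ContDiff ℝ (⊤ : ℕ∞) η₂) (hq : ContDiff ℝ (⊤ : ℕ∞) q) (d : V2) (A α₁ α₂ t : ℝ) (x : V2) :
    fderiv ℝ (twoMode η₁ η₂ (wave d (osc (A * (d.1 ^ 2 + d.2 ^ 2)) α₁) q)
        (wave d (osc (A * (d.1 ^ 2 + d.2 ^ 2)) α₂) q)) (t, x) (1, 0, 0) +
      divF (fun y => twoMode (deriv η₁) (deriv η₂) (wave d (osc (-A / (2 * π)) (α₁ - π / 2)) q)
        (wave d (osc (-A / (2 * π)) (α₂ - π / 2)) q) (t, y) • d) x = 0 := by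
  have hw : ∀ a α, Differentiable ℝ (wave d (osc a α) q) := fun a α =>
    (contDiff_wave d (contDiff_osc a α) hq).differentiable (by simp)
  have ho : ∀ a α, Differentiable ℝ (osc a α) := fun a α =>
    (contDiff_osc a α (n := 1)).differentiable one_ne_zero
  have hq' : Differentiable ℝ q := hq.differentiable (by simp)
  have hk : Differentiable ℝ fun y => twoMode (deriv η₁) (deriv η₂)
      (wave d (osc (-A / (2 * π)) (α₁ - π / 2)) q)
      (wave d (osc (-A / (2 * π)) (α₂ - π / 2)) q) (t, y) := by
    have a₁ := hw (-A / (2 * π)) (α₁ - π / 2)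
    have a₂ := hw (-A / (2 * π)) (α₂ - π / 2)
    exact (a₁.const_mul (deriv η₁ t)).add (a₂.const_mul (deriv η₂ t))
  rw [fderiv_twoMode_time (h₁.differentiable (by simp)) (h₂.differentiable (by simp)) (hw _ _)
    (hw _ _)]
  simp only [divF, Prod.smul_fst, Prod.smul_snd, smul_eq_mul]
  rw [fderiv_mul_const (hk x), fderiv_mul_const (hk x)]
  simp only [smul_apply, fderiv_twoMode_space (hw _ _) (hw _ _),
    fderiv_wave d (ho _ _) hq', deriv_osc, sub_add_cancel]
  simp only [twoMode, wave, osc, smul_eq_mul]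
  field_simp
  ring

/-- **Reference solution for the relativistic Vlasov–Poisson system with a constant
external magnetic field, under the strip assumption** (Proposition 4.4), satisfying
in addition the local conservation of charge and the zero-mean-current condition,
with charge and current densities independent of the speed of light. -/
theorem reference_solution_vlasov_poisson_strip
    (ω : Set V2) (hωopen : IsOpen ω) (hωper : Zper fun x => x ∈ ω)
    (hstrip : StripAssumption ω)
    (x₀ : V2) (r₀ : ℝ) (hr₀ : 0 < r₀) (hball : ballT2 x₀ (2 * r₀) ⊆ ω)
    (𝔟 : ℝ) (h𝔟 : 𝔟 ≠ 0) (R : ℝ) (hR : 0 < R) :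
    ∃ T > (0 : ℝ), ∃ c₀ > (0 : ℝ),
      ∃ (ρbar : ℝ × V2 → ℝ) (jbar : ℝ × V2 → V2),   -- the c-independent moments
      ∀ c ≥ c₀,
        ∃ (F : ℝ × V2 × V2 → ℝ) (φ : ℝ × V2 → ℝ) (G : ℝ × V2 × V2 → ℝ),
          -- smoothness and periodicity
          ContDiff ℝ (⊤ : ℕ∞) F ∧ ContDiff ℝ (⊤ : ℕ∞) φ ∧ ContDiff ℝ (⊤ : ℕ∞) G ∧
          (∀ t v, Zper fun x => F (t, x, v)) ∧ (∀ t, Zper fun x => φ (t, x)) ∧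
          -- compact support in velocity
          (∃ Rv : ℝ, ∀ t x v, Rv ≤ en v → F (t, x, v) = 0) ∧
          -- the source is spatially supported in ω
          (∀ t x v, x ∉ ω → G (t, x, v) = 0) ∧
          -- (i) Vlasov equation with force ∇ₓφ̄ + v̂⊥𝔟, in divergence form, and
          -- the Poisson equation
          (∀ t ∈ Set.Icc (0 : ℝ) T, ∀ x v : V2,
            (fderiv ℝ F (t, x, v) ((1 : ℝ), vhat c v, ((0 : ℝ), (0 : ℝ)))
              + fderiv ℝ
                  (fun w : V2 => (gradx φ t x + 𝔟 • pperp (vhat c w)).1 * F (t, x, w))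
                  v ((1 : ℝ), (0 : ℝ))
              + fderiv ℝ
                  (fun w : V2 => (gradx φ t x + 𝔟 • pperp (vhat c w)).2 * F (t, x, w))
                  v ((0 : ℝ), (1 : ℝ))
              = G (t, x, v)) ∧
            (lapx φ t x = (∫ w : V2, F (t, x, w)) - intT2R2 fun y w => F (t, y, w))) ∧
          -- (ii) it starts from 0 and comes back to 0
          (∀ x v, F (0, x, v) = 0) ∧ (∀ x v, F (T, x, v) = 0) ∧
          -- (iii) spatial support in ω
          (∀ t ∈ Set.Icc (0 : ℝ) T, ∀ v : V2, ∀ x, x ∉ ω → F (t, x, v) = 0) ∧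
          -- (iv) all characteristics with |v| ≤ R visit B(x₀, r₀/2) with speed ≥ 5
          (∀ x v : V2, en v < R →
            ∀ X V : ℝ → V2,
              IsRelChar c (fun t y w => gradx φ t y + 𝔟 • pperp (vhat c w)) 0 x v X V →
              ∃ t ∈ Set.Icc (T / 9) (8 * T / 9),
                X t ∈ ballT2 x₀ (r₀ / 2) ∧ 5 ≤ en (V t)) ∧
          -- (v) local conservation of charge and zero mean current, with moments
          -- independent of c
          (∀ t x, ρbar (t, x) = ∫ w : V2, F (t, x, w)) ∧
          (∀ t x, jbar (t, x)
            = (∫ w : V2, F (t, x, w) * (vhat c w).1,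
               ∫ w : V2, F (t, x, w) * (vhat c w).2)) ∧
          (∀ t ∈ Set.Icc (0 : ℝ) T, ∀ x : V2,
            fderiv ℝ ρbar (t, x) ((1 : ℝ), ((0 : ℝ), (0 : ℝ)))
              + divF (fun y => jbar (t, y)) x = 0) ∧
          (∀ t ∈ Set.Icc (0 : ℝ) T,
            intT2 (fun x => (jbar (t, x)).1) = 0 ∧
            intT2 (fun x => (jbar (t, x)).2) = 0) := by
  obtain ⟨d₁, d₂, hd, s₀, κ, hκ, hcos⟩ := hstrip.exists_cos_le hωopen hωper
  obtain ⟨e, he, hep, he1, κ', hκκ', heq⟩ := exists_profile s₀ hκ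
  obtain ⟨a, ha, ha0, haeven, hone, hK⟩ := exists_even_bump
  set d : V2 := ((d₁ : ℝ), (d₂ : ℝ)) with hd_def
  set q : ℝ → ℝ := fun s => deriv (deriv e) s - 4 * π ^ 2 * e s with hq_def
  have he2 := contDiff_deriv_of_contDiff (contDiff_deriv_of_contDiff he)
  have hq : ContDiff ℝ (⊤ : ℕ∞) q := he2.sub (contDiff_const.mul he)
  have hqp : Function.Periodic q 1 := fun s => by
    simp only [hq_def, hep s, periodic_deriv (periodic_deriv hep) s]
  have hWe : ∀ b α, ContDiff ℝ (⊤ : ℕ∞) (wave d (osc b α) e) := fun b α =>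
    contDiff_wave d (contDiff_osc b α) he
  have hWq : ∀ b α, ContDiff ℝ (⊤ : ℕ∞) (wave d (osc b α) q) := fun b α =>
    contDiff_wave d (contDiff_osc b α) hq
  have hWeper : ∀ b α, Zper (wave d (osc b α) e) := fun b α =>
    zper_wave d₁ d₂ (periodic_osc b α) hep
  have hWqper : ∀ b α, Zper (wave d (osc b α) q) := fun b α =>
    zper_wave d₁ d₂ (periodic_osc b α) hqp
  have hmean : ∀ b α, intT2 (wave d (osc b α) q) = 0 := fun b α =>
    intT2_wave_osc hd b α hq.continuous hqp
  set g₁ := grad (wave d (osc 1 0) e) with hg₁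
  set g₂ := grad (wave d (osc 1 (π / 2)) e) with hg₂
  obtain ⟨C₁, -, hC₁⟩ := (hWeper 1 0).grad.exists_bound (contDiff_grad (hWe 1 0)).continuous
  obtain ⟨C₂, -, hC₂⟩ :=
    (hWeper 1 (π / 2)).grad.exists_bound (contDiff_grad (hWe 1 (π / 2))).continuous
  obtain ⟨L₁, hL₁0, hL₁⟩ := (hWeper 1 0).grad.exists_lipschitz
    ((contDiff_grad (hWe 1 0)).of_le (by exact_mod_cast le_top))
  obtain ⟨L₂, hL₂0, hL₂⟩ := (hWeper 1 (π / 2)).grad.exists_lipschitz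
    ((contDiff_grad (hWe 1 (π / 2))).of_le (by exact_mod_cast le_top))
  obtain ⟨A, τ, c₀, hτ, hτP, hc₀, hkick⟩ := exists_kicks (R := R) (C := max C₁ C₂)
    (L := max L₁ L₂) h𝔟 (half_pos hr₀)
    (g₁ := g₁) (g₂ := g₂) (hL₁0.trans (le_max_left _ _))
    (fun x => (hC₁ x).trans (le_max_left _ _)) (fun x => (hC₂ x).trans (le_max_right _ _))
    (fun x y => (hL₁ x y).trans (by gcongr; exact le_max_left _ _))
    (fun x y => (hL₂ x y).trans (by gcongr; exact le_max_right _ _))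
    (fun x => grad_wave_nondegenerate hd (he.differentiable (by simp)) he1 x)
  set P := 2 * π / |𝔟| with hP_def
  have hP : 0 < P := by positivity
  set η₁ := pulse P τ with hη₁
  set η₂ := pulse (P + τ + 2 * P) τ with hη₂
  have hη₁s : ContDiff ℝ (⊤ : ℕ∞) η₁ := contDiff_pulse _ _
  have hη₂s : ContDiff ℝ (⊤ : ℕ∞) η₂ := contDiff_pulse _ _
  set D := d.1 ^ 2 + d.2 ^ 2 with hD
  set ρ := twoMode η₁ η₂ (wave d (osc (A * D) 0) q) (wave d (osc (A * D) (π / 2)) q) with hρ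
  set k := twoMode (deriv η₁) (deriv η₂) (wave d (osc (-A / (2 * π)) (0 - π / 2)) q)
    (wave d (osc (-A / (2 * π)) (π / 2 - π / 2)) q) with hk
  set φ := twoMode η₁ η₂ (wave d (osc A 0) e) (wave d (osc A (π / 2)) e) with hφ
  have hρs : ContDiff ℝ (⊤ : ℕ∞) ρ := contDiff_twoMode hη₁s hη₂s (hWq _ _) (hWq _ _)
  have hks : ContDiff ℝ (⊤ : ℕ∞) k := contDiff_twoMode (contDiff_deriv_of_contDiff hη₁s)
    (contDiff_deriv_of_contDiff hη₂s) (hWq _ _) (hWq _ _)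
  have hφs : ContDiff ℝ (⊤ : ℕ∞) φ := contDiff_twoMode hη₁s hη₂s (hWe _ _) (hWe _ _)
  have hlap : ∀ t x, lapx φ t x = ρ (t, x) := by
    intro t x
    rw [hφ, lapx_twoMode (hWe _ _) (hWe _ _), lap_wave_osc A 0 he, lap_wave_osc A (π / 2) he]
    rfl
  have hρmean : ∀ t, intT2 (fun x => ρ (t, x)) = 0 := fun t =>
    intT2_twoMode (hWq _ _).continuous (hWq _ _).continuous (hmean _ _) (hmean _ _) t
  have hkmean : ∀ t, intT2 (fun x => k (t, x)) = 0 := fun t =>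
    intT2_twoMode (hWq _ _).continuous (hWq _ _).continuous (hmean _ _) (hmean _ _) t
  have hout : ∀ t x, cos (2 * π * (d.1 * x.2 - d.2 * x.1 - s₀)) < κ' →
      ρ (t, x) = 0 ∧ k (t, x) = 0 := by
    intro t x hx
    have h0 : q (d.1 * x.2 - d.2 * x.1) = 0 := heq _ hx
    constructor <;> simp [hρ, hk, twoMode, wave, h0]
  have htime : ∀ t, (t < P ∨ 8 * P < t) → ∀ x, ρ (t, x) = 0 ∧ k (t, x) = 0 := by
    intro t ht x
    have h1 : t < P ∨ P + τ < t := ht.imp_right fun h => by linarith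
    have h2 : t < P + τ + 2 * P ∨ P + τ + 2 * P + τ < t :=
      ht.imp (fun h => by linarith) fun h => by linarith
    have e1 : η₁ t = 0 := pulse_eq_zero hτ (h1.imp le_of_lt le_of_lt)
    have e2 : η₂ t = 0 := pulse_eq_zero hτ (h2.imp le_of_lt le_of_lt)
    have e3 : deriv η₁ t = 0 := deriv_pulse_eq_zero hτ h1
    have e4 : deriv η₂ t = 0 := deriv_pulse_eq_zero hτ h2
    constructor <;> simp [hρ, hk, twoMode, e1, e2, e3, e4]
  refine ⟨9 * P, by positivity, c₀, hc₀, ρ, fun p => k p • d, fun c hc => ?_⟩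
  set F : ℝ × V2 × V2 → ℝ := fun p => velDist a c (ρ (p.1, p.2.1)) (k (p.1, p.2.1) • d) p.2.2
    with hF
  have hFs : ContDiff ℝ (⊤ : ℕ∞) F := contDiff_velDist ha c hρs (hks.smul contDiff_const)
  have hF0 : ∀ t x v, ρ (t, x) = 0 ∧ k (t, x) = 0 → F (t, x, v) = 0 := by
    rintro t x v ⟨h1, h2⟩
    simp [hF, velDist, h1, h2]
  have hFρ : ∀ t x, ∫ w : V2, F (t, x, w) = ρ (t, x) := fun t x =>
    integral_velDist c (ρ (t, x)) (k (t, x) • d) ha.continuous ha0 haeven hone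
  have hFj := fun t x => integral_velDist_mul_vhat c (ρ (t, x)) (k (t, x) • d) ha.continuous ha0
    haeven hone hK
  have hout' : ∀ x, x ∉ ω → cos (2 * π * (d.1 * x.2 - d.2 * x.1 - s₀)) < κ' := fun x hx =>
    (hcos x hx).trans_lt hκκ'
  obtain ⟨G, hGs, hG0, hG⟩ := exists_source c 𝔟 hFs
    (contDiff_gradx_twoMode hη₁s hη₂s (hWe A 0) (hWe A (π / 2)))
  have hρper : ∀ t, Zper fun x => ρ (t, x) := zper_twoMode (hWqper _ _) (hWqper _ _)
  have hkper : ∀ t, Zper fun x => k (t, x) := zper_twoMode (hWqper _ _) (hWqper _ _)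
  refine ⟨F, φ, G, hFs, hφs, hGs, fun t v x m n => ?_, zper_twoMode (hWeper _ _) (hWeper _ _),
    ⟨2, fun t x v hv => velDist_eq_zero c _ _ ha0 hv⟩, fun t x v hx => hG0 _ ?_,
    fun t _ x v => ⟨hG t x v, ?_⟩, fun x v => hF0 _ _ _ (htime 0 (Or.inl hP) x),
    fun x v => hF0 _ _ _ (htime _ (Or.inr (by linarith)) x),
    fun t _ v x hx => hF0 _ _ _ (hout t x (hout' x hx)), fun x v hv X V hXV => ?_,
    fun t x => (hFρ t x).symm, fun t x => Prod.ext (hFj t x).1.symm (hFj t x).2.symm,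
    fun t _ x => charge_conservation hη₁s hη₂s hq d A 0 (π / 2) t x, fun t _ => ?_⟩
  · have h1 := hρper t x m n
    have h2 := hkper t x m n
    simp only [hF, h1, h2]
  · have hc : Continuous fun p : ℝ × V2 × V2 =>
        cos (2 * π * (d.1 * p.2.1.2 - d.2 * p.2.1.1 - s₀)) := by fun_prop
    filter_upwards [(isOpen_lt hc continuous_const).mem_nhds (hout' x hx)] with p hp
    exact hF0 _ _ _ (hout _ _ hp)
  · rw [hlap, intT2R2]
    simp only [hFρ]
    have h := hρmean t
    rw [intT2] at h
    rw [h, sub_zero]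
  · rw [show 9 * P / 9 = P by ring, show 8 * (9 * P) / 9 = 8 * P by ring]
    refine hkick c hc x₀ (gradx φ) (fun t y => ?_) x v hv X V hXV
    have hgrad : ∀ α, grad (wave d (osc A α) e) y = A • grad (wave d (osc 1 α) e) y := by
      intro α
      have h := ((hWe 1 α).differentiable (by simp)) y
      rw [funext (wave_osc_mul d A α e), grad, fderiv_const_mul h, grad]
      rfl
    rw [hφ, gradx_twoMode ((hWe _ _).differentiable (by simp)) ((hWe _ _).differentiable (by simp)),
      hgrad, hgrad]
  · have h := hkmean t
    simp only [intT2, Prod.smul_fst, Prod.smul_snd, smul_eq_mul, integral_mul_const] at h ⊢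
    rw [h, zero_mul, zero_mul]
    exact ⟨rfl, rfl⟩

end
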